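/- arXiv:1307.1242 — 4 statements merged into one kernel-verified Lean document; each statement's English description precedes it below -/
import Mathlib

section
/- Let Δ ≥ 1 and let T_Δ be the tree consisting of a root v of degree Δ, with neighbors v_1, …, v_Δ, where each v_i additionally has exactly Δ−1 pendant leaves (so T_Δ has 1 + Δ + Δ(Δ−1) vertices). Then the star chromatic index of T_Δ equals ⌊3Δ/2⌋. -/
/-- A star edge coloring of a simple graph with `k` colors: edges sharing an
endpoint receive distinct colors, and on every path with exactly 4 edges
(a walk of length 4 whose five vertices are pairwise distinct) and on every
cycle of length 4, at least three distinct colors appear among the four edges. -/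
def IsStarEdgeColoring {V : Type*} {k : ℕ} (G : SimpleGraph V)
    (c : Sym2 V → Fin k) : Prop :=
  (∀ u v w : V, G.Adj u v → G.Adj u w → v ≠ w → c s(u, v) ≠ c s(u, w)) ∧
  (∀ v₀ v₁ v₂ v₃ v₄ : V,
    G.Adj v₀ v₁ → G.Adj v₁ v₂ → G.Adj v₂ v₃ → G.Adj v₃ v₄ →
    ([v₀, v₁, v₂, v₃, v₄].Pairwise (· ≠ ·) ∨
      (v₀ = v₄ ∧ [v₀, v₁, v₂, v₃].Pairwise (· ≠ ·))) →
    3 ≤ ({c s(v₀, v₁), c s(v₁, v₂), c s(v₂, v₃), c s(v₃, v₄)} : Finset (Fin k)).card)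

/-- The star chromatic index of a graph: the least `k` such that `G` admits a
star edge coloring with `k` colors. -/
noncomputable def starChromaticIndex {V : Type*} (G : SimpleGraph V) : ℕ :=
  sInf {k : ℕ | ∃ c : Sym2 V → Fin k, IsStarEdgeColoring G c}

/-- The tree `T_Δ` with a root of degree `Δ` whose `Δ` neighbors each carry
`Δ - 1` additional pendant leaves. -/
def spiderTree (Δ : ℕ) : SimpleGraph (Unit ⊕ Fin Δ ⊕ Fin Δ × Fin (Δ - 1)) :=
  SimpleGraph.fromRel fun x y =>
    (∃ i : Fin Δ, x = Sum.inl () ∧ y = Sum.inr (Sum.inl i)) ∨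
    (∃ (i : Fin Δ) (j : Fin (Δ - 1)),
      x = Sum.inr (Sum.inl i) ∧ y = Sum.inr (Sum.inr (i, j)))

/-!
Lower bound: let `v` have degree `d` and let all its neighbors have degree at least `m`. Among
`k` colors, the colors at a neighbor `w` and the colors at `v` overlap in at least `m + d - k`
colors. Write `w → w'` if the color of `v w'` occurs at `w`. Two distinct neighbors with `w → w'`
and `w' → w` would give a bichromatic path or cycle through `v`, so `→` is antisymmetric and has at
most `d (d + 1) / 2` arcs; hence `d (m + d - k) ≤ d (d + 1) / 2`.

Upper bound: color the edge at the root towards the `i`-th branch with `i`, and let the leaf edges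
of that branch use the `⌊(Δ - 1) / 2⌋` cyclic successors of `i` modulo `Δ`, together with `⌊Δ / 2⌋`
colors that do not occur at the root. Two residues are never both among the first
`⌊(Δ - 1) / 2⌋` successors of each other.
-/

open Finset

theorem three_le_card_of_ne {α : Type*} [DecidableEq α] {a b c d : α} (hab : a ≠ b) (hbc : b ≠ c)
    (hcd : c ≠ d) (h : a = c → b ≠ d) : 3 ≤ #{a, b, c, d} := by
  by_cases hac : a = c
  · calc 3 = #{b, c, d} := (card_eq_three.2 ⟨b, c, d, hbc, h hac, hcd, rfl⟩).symm
      _ ≤ #{a, b, c, d} := card_le_card (subset_insert _ _)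
  · calc 3 = #{a, b, c} := (card_eq_three.2 ⟨a, b, c, hab, hac, hbc, rfl⟩).symm
      _ ≤ #{a, b, c, d} := card_le_card (by grind)

theorem two_mul_sum_card_filter_le_of_antisymm {α : Type*} (s : Finset α) (r : α → α → Prop)
    [DecidableRel r] (hr : ∀ a ∈ s, ∀ b ∈ s, r a b → r b a → a = b) :
    2 * ∑ a ∈ s, #{b ∈ s | r a b} ≤ #s * (#s + 1) := by
  classical
  calc 2 * ∑ a ∈ s, #{b ∈ s | r a b}
      = ∑ a ∈ s, ∑ b ∈ s, ((if r a b then 1 else 0) + if r b a then 1 else 0) := by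
        simp only [card_filter, sum_add_distrib]
        rw [two_mul, sum_comm (f := fun a b => if r b a then 1 else 0)]
    _ ≤ ∑ a ∈ s, ∑ b ∈ s, (1 + if a = b then 1 else 0) := by
        refine sum_le_sum fun a ha => sum_le_sum fun b hb => ?_
        have := hr a ha b hb
        grind
    _ = #s * (#s + 1) := by
        simp [sum_add_distrib, mul_add]

section StarEdgeColoring

variable {V : Type*} {k : ℕ} {G : SimpleGraph V} {c : Sym2 V → Fin k}

theorem isStarEdgeColoring_iff_nonbacktracking :
    IsStarEdgeColoring G c ↔
      (∀ u v w : V, G.Adj u v → G.Adj u w → v ≠ w → c s(u, v) ≠ c s(u, w)) ∧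
      ∀ v₀ v₁ v₂ v₃ v₄ : V, G.Adj v₀ v₁ → G.Adj v₁ v₂ → G.Adj v₂ v₃ → G.Adj v₃ v₄ →
        v₀ ≠ v₂ → v₁ ≠ v₃ → v₂ ≠ v₄ →
        c s(v₀, v₁) = c s(v₂, v₃) → c s(v₁, v₂) ≠ c s(v₃, v₄) := by
  refine and_congr_right fun proper => ⟨fun h => ?_, fun h => ?_⟩ <;>
    intro v₀ v₁ v₂ v₃ v₄ h₀₁ h₁₂ h₂₃ h₃₄
  · intro h₀₂ h₁₃ h₂₄ h_odd h_even
    have h₀₃ : v₀ ≠ v₃ := by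
      rintro rfl
      exact proper v₀ v₁ v₂ h₀₁ h₂₃.symm h₁₂.ne (h_odd.trans (congrArg c Sym2.eq_swap))
    have h₁₄ : v₁ ≠ v₄ := by
      rintro rfl
      exact proper v₁ v₂ v₃ h₁₂ h₃₄.symm h₂₃.ne (h_even.trans (congrArg c Sym2.eq_swap))
    have three_le := h v₀ v₁ v₂ v₃ v₄ h₀₁ h₁₂ h₂₃ h₃₄ (by
      have := h₀₁.ne; have := h₁₂.ne; have := h₂₃.ne; have := h₃₄.ne
      by_cases h₀₄ : v₀ = v₄ <;> simp_all)
    rw [h_odd, h_even] at three_le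
    have le_two := card_le_two (a := c s(v₂, v₃)) (b := c s(v₃, v₄))
    grind
  · intro h_distinct
    have ⟨h₀₂, h₁₃, h₂₄⟩ : v₀ ≠ v₂ ∧ v₁ ≠ v₃ ∧ v₂ ≠ v₄ := by
      rcases h_distinct with h | ⟨rfl, h⟩ <;>
        simp only [List.pairwise_cons, List.mem_cons] at h <;> grind
    refine three_le_card_of_ne ?_ ?_ ?_ (h v₀ v₁ v₂ v₃ v₄ h₀₁ h₁₂ h₂₃ h₃₄ h₀₂ h₁₃ h₂₄)
    · simpa only [Sym2.eq_swap] using proper v₁ v₀ v₂ h₀₁.symm h₁₂ h₀₂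
    · simpa only [Sym2.eq_swap] using proper v₂ v₁ v₃ h₁₂.symm h₂₃ h₁₃
    · simpa only [Sym2.eq_swap] using proper v₃ v₂ v₄ h₂₃.symm h₃₄ h₂₄

/-- The set of colors that an edge coloring `c` of `G` uses on the edges at the vertex `v`. -/
def edgeColorsAt (G : SimpleGraph V) (c : Sym2 V → Fin k) (v : V) [Fintype (G.neighborSet v)] :
    Finset (Fin k) :=
  (G.neighborFinset v).image fun w => c s(v, w)

theorem mem_edgeColorsAt {v : V} [Fintype (G.neighborSet v)] {a : Fin k} :
    a ∈ edgeColorsAt G c v ↔ ∃ w, G.Adj v w ∧ c s(v, w) = a := by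
  simp [edgeColorsAt]

namespace IsStarEdgeColoring

theorem card_edgeColorsAt (hc : IsStarEdgeColoring G c) (v : V) [Fintype (G.neighborSet v)] :
    #(edgeColorsAt G c v) = G.degree v := by
  refine card_image_of_injOn fun w hw w' hw' hww' => ?_
  simp only [SimpleGraph.coe_neighborFinset, SimpleGraph.mem_neighborSet] at hw hw'
  exact by_contra fun hne => hc.1 v w w' hw hw' hne hww'

theorem degree_add_degree_le [G.LocallyFinite] (hc : IsStarEdgeColoring G c) (v w : V) :
    G.degree w + G.degree v ≤
      k + #{w' ∈ G.neighborFinset v | c s(v, w') ∈ edgeColorsAt G c w} := by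
  have inter_subset : edgeColorsAt G c w ∩ edgeColorsAt G c v ⊆
      ({w' ∈ G.neighborFinset v | c s(v, w') ∈ edgeColorsAt G c w}).image fun w' => c s(v, w') := by
    rw [edgeColorsAt.eq_def G c v, inter_comm, ← filter_mem_eq_inter, filter_image]
  calc G.degree w + G.degree v
      = #(edgeColorsAt G c w ∪ edgeColorsAt G c v) +
          #(edgeColorsAt G c w ∩ edgeColorsAt G c v) := by
        rw [card_union_add_card_inter, hc.card_edgeColorsAt, hc.card_edgeColorsAt]
    _ ≤ k + #{w' ∈ G.neighborFinset v | c s(v, w') ∈ edgeColorsAt G c w} :=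
        add_le_add (card_finset_fin_le _) ((card_le_card inter_subset).trans card_image_le)

theorem eq_of_mem_edgeColorsAt [G.LocallyFinite] (hc : IsStarEdgeColoring G c) {v w w' : V}
    (hw : G.Adj v w) (hw' : G.Adj v w') (h : c s(v, w') ∈ edgeColorsAt G c w)
    (h' : c s(v, w) ∈ edgeColorsAt G c w') : w = w' := by
  obtain ⟨proper, nonbacktracking⟩ := isStarEdgeColoring_iff_nonbacktracking.1 hc
  by_contra hne
  have ne_center {u u' x : V} (hu : G.Adj v u) (hu' : G.Adj v u') (huu' : u ≠ u')
      (hx : c s(u, x) = c s(v, u')) : x ≠ v := by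
    rintro rfl
    exact proper x u u' hu hu' huu' (by rwa [Sym2.eq_swap])
  obtain ⟨x, hwx, hx⟩ := mem_edgeColorsAt.1 h
  obtain ⟨y, hwy, hy⟩ := mem_edgeColorsAt.1 h'
  refine nonbacktracking x w v w' y hwx.symm hw.symm hw' hwy (ne_center hw hw' hne hx) hne
    (ne_center hw' hw (Ne.symm hne) hy).symm ?_ ?_
  · rw [Sym2.eq_swap, hx]
  · rw [Sym2.eq_swap, hy]

theorem two_mul_add_degree_le [G.LocallyFinite] (hc : IsStarEdgeColoring G c) {v : V} {m : ℕ}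
    (hv : 0 < G.degree v) (hm : ∀ w, G.Adj v w → m ≤ G.degree w) :
    2 * m + G.degree v ≤ 2 * k + 1 := by
  set d := G.degree v
  set overlap : V → ℕ := fun w => #{w' ∈ G.neighborFinset v | c s(v, w') ∈ edgeColorsAt G c w}
  have sum_overlap_le : 2 * ∑ w ∈ G.neighborFinset v, overlap w ≤ d * (d + 1) := by
    refine two_mul_sum_card_filter_le_of_antisymm (G.neighborFinset v)
      (fun w w' => c s(v, w') ∈ edgeColorsAt G c w) fun w hw w' hw' => ?_
    rw [SimpleGraph.mem_neighborFinset] at hw hw'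
    exact hc.eq_of_mem_edgeColorsAt hw hw'
  have le_sum_overlap : d * (m + d) ≤ d * k + ∑ w ∈ G.neighborFinset v, overlap w := by
    calc d * (m + d) = ∑ _w ∈ G.neighborFinset v, (m + d) := by
          rw [sum_const, smul_eq_mul, SimpleGraph.card_neighborFinset_eq_degree]
      _ ≤ ∑ w ∈ G.neighborFinset v, (k + overlap w) := by
          refine sum_le_sum fun w hw => ?_
          have := hm w ((G.mem_neighborFinset v w).1 hw)
          exact (Nat.add_le_add_right this d).trans (hc.degree_add_degree_le v w)
      _ = d * k + ∑ w ∈ G.neighborFinset v, overlap w := by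
          rw [sum_add_distrib, sum_const, smul_eq_mul, SimpleGraph.card_neighborFinset_eq_degree]
  have : 2 * (m + d) ≤ 2 * k + (d + 1) := by
    refine Nat.le_of_mul_le_mul_left ?_ hv
    linarith
  omega

end IsStarEdgeColoring

end StarEdgeColoring

namespace spiderTree

variable {Δ : ℕ}

/-- The root of the tree `T_Δ`. -/
abbrev root : Unit ⊕ Fin Δ ⊕ Fin Δ × Fin (Δ - 1) := Sum.inl ()

/-- The `i`-th neighbor of the root of `T_Δ`, written `v_i` on paper. -/
abbrev branch (i : Fin Δ) : Unit ⊕ Fin Δ ⊕ Fin Δ × Fin (Δ - 1) := Sum.inr (Sum.inl i)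

/-- The `j`-th pendant leaf at the `i`-th branch vertex of `T_Δ`. -/
abbrev leaf (i : Fin Δ) (j : Fin (Δ - 1)) : Unit ⊕ Fin Δ ⊕ Fin Δ × Fin (Δ - 1) :=
  Sum.inr (Sum.inr (i, j))

theorem adj_root_iff {x} : (spiderTree Δ).Adj root x ↔ ∃ i, x = branch i := by
  rcases x with _ | _ | _ <;> simp [spiderTree]

theorem adj_branch_iff {i : Fin Δ} {x} :
    (spiderTree Δ).Adj (branch i) x ↔ x = root ∨ ∃ j, x = leaf i j := by
  rcases x with _ | _ | ⟨_, _⟩ <;> simp [spiderTree, eq_comm]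

theorem adj_leaf_iff {i : Fin Δ} {j : Fin (Δ - 1)} {x} :
    (spiderTree Δ).Adj (leaf i j) x ↔ x = branch i := by
  rcases x with _ | _ | ⟨_, _⟩ <;> simp [spiderTree, eq_comm]

theorem degree_root [(spiderTree Δ).LocallyFinite] : (spiderTree Δ).degree root = Δ := by
  have : (spiderTree Δ).neighborFinset root = univ.image branch := by
    ext x
    simp [adj_root_iff, eq_comm]
  rw [← SimpleGraph.card_neighborFinset_eq_degree, this, card_image_of_injective, card_fin]
  exact Sum.inr_injective.comp Sum.inl_injective

theorem degree_branch [(spiderTree Δ).LocallyFinite] (i : Fin Δ) :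
    (spiderTree Δ).degree (branch i) = Δ := by
  have : (spiderTree Δ).neighborFinset (branch i) = insert root (univ.image (leaf i)) := by
    ext x
    simp [adj_branch_iff, eq_comm]
  have leaf_injective : (leaf i).Injective := fun j j' h => by simpa using h
  rw [← SimpleGraph.card_neighborFinset_eq_degree, this, card_insert_of_notMem (by simp),
    card_image_of_injective _ leaf_injective, card_fin, Nat.sub_add_cancel i.pos]

theorem exists_eq_leaf_branch_root_branch_leaf {v₀ v₁ v₂ v₃ v₄} (h₀₁ : (spiderTree Δ).Adj v₀ v₁)
    (h₁₂ : (spiderTree Δ).Adj v₁ v₂) (h₂₃ : (spiderTree Δ).Adj v₂ v₃)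
    (h₃₄ : (spiderTree Δ).Adj v₃ v₄) (h₀₂ : v₀ ≠ v₂) (h₁₃ : v₁ ≠ v₃) (h₂₄ : v₂ ≠ v₄) :
    ∃ i j i' j', v₀ = leaf i j ∧ v₁ = branch i ∧ v₂ = root ∧ v₃ = branch i' ∧ v₄ = leaf i' j' := by
  rcases v₂ with _ | i | ⟨i, j⟩
  · obtain ⟨i, rfl⟩ := adj_root_iff.1 h₁₂.symm
    obtain ⟨i', rfl⟩ := adj_root_iff.1 h₂₃
    obtain ⟨j, rfl⟩ := (adj_branch_iff.1 h₀₁.symm).resolve_left h₀₂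
    obtain ⟨j', rfl⟩ := (adj_branch_iff.1 h₃₄).resolve_left h₂₄.symm
    exact ⟨i, j, i', j', rfl, rfl, rfl, rfl, rfl⟩
  · rcases adj_branch_iff.1 h₁₂.symm with rfl | ⟨j, rfl⟩
    · obtain ⟨j, rfl⟩ := (adj_branch_iff.1 h₂₃).resolve_left h₁₃.symm
      exact absurd (adj_leaf_iff.1 h₃₄).symm h₂₄
    · exact absurd (adj_leaf_iff.1 h₀₁.symm) h₀₂
  · exact absurd ((adj_leaf_iff.1 h₁₂.symm).trans (adj_leaf_iff.1 h₂₃).symm) h₁₃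

section Coloring

variable {k : ℕ} [NeZero k]

/-- The edge coloring of `T_Δ` with color `r i` on the edge from the root to the `i`-th branch
vertex and color `l i j` on the edge from there to its `j`-th leaf. Pairs of non-adjacent vertices
get the color `0` or, for a branch vertex and a leaf at another one, the color of the leaf. -/
def coloring (r : Fin Δ → Fin k) (l : Fin Δ → Fin (Δ - 1) → Fin k) :
    Sym2 (Unit ⊕ Fin Δ ⊕ Fin Δ × Fin (Δ - 1)) → Fin k :=
  Sym2.lift ⟨fun
    | Sum.inl _, Sum.inr (Sum.inl i) | Sum.inr (Sum.inl i), Sum.inl _ => r i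
    | Sum.inr (Sum.inl _), Sum.inr (Sum.inr (i, j))
    | Sum.inr (Sum.inr (i, j)), Sum.inr (Sum.inl _) => l i j
    | _, _ => 0, by rintro (_ | _ | _) (_ | _ | _) <;> rfl⟩

theorem isStarEdgeColoring_coloring {r : Fin Δ → Fin k} {l : Fin Δ → Fin (Δ - 1) → Fin k}
    (hr : r.Injective) (hl : ∀ i, (l i).Injective)
    (hrl : ∀ i i' j j', l i j = r i' → l i' j' ≠ r i) :
    IsStarEdgeColoring (spiderTree Δ) (coloring r l) := by
  have leaf_ne_root (i j) : l i j ≠ r i := fun h => hrl i i j j h h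
  refine isStarEdgeColoring_iff_nonbacktracking.2 ⟨fun u v w huv huw hvw => ?_, ?_⟩
  · rcases u with _ | i | ⟨i, j⟩
    · obtain ⟨i, rfl⟩ := adj_root_iff.1 huv
      obtain ⟨i', rfl⟩ := adj_root_iff.1 huw
      exact hr.ne fun h => hvw (congrArg branch h)
    · rcases adj_branch_iff.1 huv with rfl | ⟨j, rfl⟩ <;>
        rcases adj_branch_iff.1 huw with rfl | ⟨j', rfl⟩
      · exact absurd rfl hvw
      · exact (leaf_ne_root i j').symm
      · exact leaf_ne_root i j
      · exact (hl i).ne fun h => hvw (congrArg (leaf i) h)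
    · exact absurd ((adj_leaf_iff.1 huv).trans (adj_leaf_iff.1 huw).symm) hvw
  · intro v₀ v₁ v₂ v₃ v₄ h₀₁ h₁₂ h₂₃ h₃₄ h₀₂ h₁₃ h₂₄ h_odd h_even
    obtain ⟨i, j, i', j', rfl, rfl, rfl, rfl, rfl⟩ :=
      exists_eq_leaf_branch_root_branch_leaf h₀₁ h₁₂ h₂₃ h₃₄ h₀₂ h₁₃ h₂₄
    exact hrl i i' j j' h_odd h_even.symm

end Coloring

/-- The color of the edge from the `i`-th branch vertex to its `j`-th leaf in an optimal coloring
of `T_Δ` whose edges at the root have the colors `0, …, Δ - 1`: one of the first `(Δ - 1) / 2`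
cyclic successors of `i`, or a color from `Δ` on. The reduction modulo `Δ` is written as a case
distinction so that linear arithmetic applies. -/
def leafColor (Δ i j : ℕ) : ℕ :=
  if j < (Δ - 1) / 2 then (if i + j + 1 < Δ then i + j + 1 else i + j + 1 - Δ)
  else Δ + (j - (Δ - 1) / 2)

theorem leafColor_lt {i j : ℕ} (hi : i < Δ) (hj : j < Δ - 1) : leafColor Δ i j < 3 * Δ / 2 := by
  grind [leafColor]

theorem leafColor_injective {i j j' : ℕ} (hi : i < Δ) (h : leafColor Δ i j = leafColor Δ i j') :
    j = j' := by
  unfold leafColor at h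
  split_ifs at h <;> omega

theorem leafColor_ne_of_leafColor_eq {i i' j j' : ℕ} (hi : i < Δ) (hi' : i' < Δ)
    (h : leafColor Δ i j = i') : leafColor Δ i' j' ≠ i := by
  unfold leafColor at h ⊢
  split_ifs at h ⊢ <;> omega

theorem exists_isStarEdgeColoring (hΔ : 1 ≤ Δ) :
    ∃ c : Sym2 _ → Fin (3 * Δ / 2), IsStarEdgeColoring (spiderTree Δ) c := by
  have : NeZero (3 * Δ / 2) := ⟨by omega⟩
  refine ⟨coloring (Fin.castLE (by omega)) fun i j => ⟨leafColor Δ i j, leafColor_lt i.2 j.2⟩,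
    isStarEdgeColoring_coloring (Fin.castLE_injective _) (fun i j j' h => ?_)
      fun i i' j j' h h' => ?_⟩
  · exact Fin.ext (leafColor_injective i.2 (congrArg Fin.val h))
  · exact leafColor_ne_of_leafColor_eq i.2 i'.2 (congrArg Fin.val h) (congrArg Fin.val h')

theorem three_mul_div_two_le_of_isStarEdgeColoring {k : ℕ} {c : Sym2 _ → Fin k}
    (hc : IsStarEdgeColoring (spiderTree Δ) c) : 3 * Δ / 2 ≤ k := by
  classical
  rcases Δ.eq_zero_or_pos with rfl | hΔ
  · exact Nat.zero_le k
  · have : 2 * Δ + Δ ≤ 2 * k + 1 := by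
      have le_degree (w) (hw : (spiderTree Δ).Adj root w) : Δ ≤ (spiderTree Δ).degree w := by
        obtain ⟨i, rfl⟩ := adj_root_iff.1 hw
        exact (degree_branch i).ge
      simpa only [degree_root] using hc.two_mul_add_degree_le (by rwa [degree_root]) le_degree
    omega

end spiderTree

/-- For `Δ ≥ 1`, the star chromatic index of `T_Δ` equals `⌊3Δ/2⌋`. -/
theorem starChromaticIndex_spiderTree (Δ : ℕ) (hΔ : 1 ≤ Δ) :
    starChromaticIndex (spiderTree Δ) = 3 * Δ / 2 :=
  IsLeast.csInf_eq ⟨spiderTree.exists_isStarEdgeColoring hΔ,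
    fun _ ⟨_, hc⟩ => spiderTree.three_mul_div_two_le_of_isStarEdgeColoring hc⟩
end

section
/- For every n ≥ 3 with n ≠ 5, the cycle graph C_n on n vertices admits a star edge coloring with 3 colors; that is, χ'_s(C_n) ≤ 3. -/
/-!
Around the cycle, concatenate blocks `012` and `0121`. Neighbouring letters differ, and consecutive
`0`s are at distance 3 or 4: any four consecutive letters contain a `0`, but never two `0`s at
distance 2, so they do not have the form `abab`. Every `n ≥ 3` other than `5` has the form
`3a + 4b`.
-/

section StarWords

variable {α : Type*}

/-- Four consecutive colors allowed along a path by a star edge coloring: neighbouring colors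
differ and the pattern is not `abab`. -/
def IsStarWindow (a b c d : α) : Prop :=
  a ≠ b ∧ b ≠ c ∧ c ≠ d ∧ (a = c → b ≠ d)

instance [DecidableEq α] (a b c d : α) : Decidable (IsStarWindow a b c d) :=
  inferInstanceAs (Decidable (_ ∧ _))

theorem IsStarWindow.symm {a b c d : α} (h : IsStarWindow a b c d) : IsStarWindow d c b a :=
  ⟨h.2.2.1.symm, h.2.1.symm, h.1.symm, fun hdb hca => h.2.2.2 hca.symm hdb.symm⟩

theorem IsStarWindow.three_le_card [DecidableEq α] {a b c d : α} (h : IsStarWindow a b c d) :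
    3 ≤ ({a, b, c, d} : Finset α).card := by
  obtain ⟨hab, hbc, hcd, habab⟩ := h
  rw [Nat.succ_le_iff, Finset.two_lt_card]
  by_cases hac : a = c
  · exact ⟨b, by simp, c, by simp, d, by simp, hbc, habab hac, hcd⟩
  · exact ⟨a, by simp, b, by simp, c, by simp, hab, hac, hbc⟩

/-- The letters `f 0, …, f (n - 1)` form a word that can be closed up to a cyclic coloring, or
followed by another such word: it continues with the prefix `p` that it starts with, and the windows
starting in it are star windows. Letters of `f` beyond the overlap `f n, f (n + 1), f (n + 2)` are
irrelevant. -/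
structure IsStarWord (p : Fin 3 → α) (n : ℕ) (f : ℕ → α) : Prop where
  start_eq : ∀ j : Fin 3, f j = p j
  overlap_eq : ∀ j : Fin 3, f (n + j) = p j
  window : ∀ i < n, IsStarWindow (f i) (f (i + 1)) (f (i + 2)) (f (i + 3))

theorem isStarWord_zero (p : Fin 3 → α) : IsStarWord p 0 (fun i => p (Fin.ofNat 3 i)) where
  start_eq j := by simp
  overlap_eq j := by simp
  window i hi := absurd hi i.not_lt_zero

theorem IsStarWord.append {p : Fin 3 → α} {m n : ℕ} {f g : ℕ → α}
    (hf : IsStarWord p m f) (hg : IsStarWord p n g) :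
    IsStarWord p (m + n) (fun i => if i < m then f i else g (i - m)) := by
  set h : ℕ → α := fun i => if i < m then f i else g (i - m)
  have h_add (i : ℕ) : h (m + i) = g i := by simp [h]
  have h_eq_left (i : ℕ) (hi : i < m + 3) : h i = f i := by
    rcases lt_or_ge i m with him | hmi
    · exact if_pos him
    · obtain ⟨j, rfl⟩ := Nat.exists_eq_add_of_le hmi
      have hj : j < 3 := by omega
      rw [h_add, hg.start_eq ⟨j, hj⟩, hf.overlap_eq ⟨j, hj⟩]
  refine ⟨fun j => ?_, fun j => ?_, fun i hi => ?_⟩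
  · rw [h_eq_left j (by omega), hf.start_eq]
  · rw [add_assoc, h_add, hg.overlap_eq]
  · rcases lt_or_ge i m with him | hmi
    · simpa only [h_eq_left _ (show i < m + 3 by omega), h_eq_left _ (show i + 1 < m + 3 by omega),
        h_eq_left _ (show i + 2 < m + 3 by omega), h_eq_left _ (show i + 3 < m + 3 by omega)]
        using hf.window i him
    · obtain ⟨j, rfl⟩ := Nat.exists_eq_add_of_le hmi
      simpa only [add_assoc, h_add] using hg.window j (by omega)

theorem IsStarWord.apply_mod {p : Fin 3 → α} {n : ℕ} {f : ℕ → α} (hf : IsStarWord p n f)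
    (hn : 3 ≤ n) {i : ℕ} (hi : i < n + 3) : f (i % n) = f i := by
  rcases lt_or_ge i n with hin | hni
  · rw [Nat.mod_eq_of_lt hin]
  · obtain ⟨j, rfl⟩ := Nat.exists_eq_add_of_le hni
    have hj : j < 3 := by omega
    rw [Nat.add_mod_left, Nat.mod_eq_of_lt (by omega), hf.start_eq ⟨j, hj⟩,
      hf.overlap_eq ⟨j, hj⟩]

theorem IsStarWord.cyclic_window {p : Fin 3 → α} {n : ℕ} {f : ℕ → α}
    (hf : IsStarWord p (n + 3) f) (i : Fin (n + 3)) :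
    IsStarWindow (f i) (f ↑(i + 1)) (f ↑(i + 1 + 1)) (f ↑(i + 1 + 1 + 1)) := by
  have hmod {j : ℕ} (hj : j ≤ 3) : f ((i + j) % (n + 3)) = f (i + j) :=
    hf.apply_mod (by omega) (by omega)
  simpa [Fin.val_add, add_assoc, hmod] using hf.window i i.isLt

/-- The lengths of star words with prefix `p`; they form a submonoid because star words with the
same prefix can be concatenated. -/
def starWordLengths (p : Fin 3 → α) : AddSubmonoid ℕ where
  carrier := {n | ∃ f, IsStarWord p n f}
  zero_mem' := ⟨_, isStarWord_zero p⟩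
  add_mem' := fun ⟨_, hf⟩ ⟨_, hg⟩ => ⟨_, hf.append hg⟩

theorem three_mem_starWordLengths : 3 ∈ starWordLengths (![0, 1, 2] : Fin 3 → Fin 3) :=
  ⟨fun i => ![0, 1, 2] (Fin.ofNat 3 i), by decide, by decide, by decide⟩

theorem four_mem_starWordLengths : 4 ∈ starWordLengths (![0, 1, 2] : Fin 3 → Fin 3) :=
  ⟨fun i => ![0, 1, 2, 1] (Fin.ofNat 4 i), by decide, by decide, by decide⟩

theorem mem_starWordLengths {n : ℕ} (hn : 3 ≤ n) (hn5 : n ≠ 5) :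
    n ∈ starWordLengths (![0, 1, 2] : Fin 3 → Fin 3) := by
  have hsum : n = (n / 3 - n % 3) • 3 + (n % 3) • 4 := by
    simp only [smul_eq_mul]
    omega
  rw [hsum]
  exact add_mem (nsmul_mem three_mem_starWordLengths _) (nsmul_mem four_mem_starWordLengths _)

end StarWords

section CycleGraph

open SimpleGraph

variable {n : ℕ}

theorem cycleGraph_adj_iff_eq_add_one {u v : Fin (n + 2)} :
    (cycleGraph (n + 2)).Adj u v ↔ v = u + 1 ∨ u = v + 1 := by
  rw [cycleGraph_adj, sub_eq_iff_eq_add', sub_eq_iff_eq_add', or_comm]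

theorem eq_add_one_of_cycleGraph_adj {u v w : Fin (n + 2)} (huv : v = u + 1)
    (hvw : (cycleGraph (n + 2)).Adj v w) (huw : u ≠ w) : w = v + 1 :=
  (cycleGraph_adj_iff_eq_add_one.mp hvw).resolve_right
    fun hwv => huw (add_right_cancel (huv.symm.trans hwv))

theorem add_one_eq_of_cycleGraph_adj {u v w : Fin (n + 2)} (huv : v + 1 = u)
    (hvw : (cycleGraph (n + 2)).Adj v w) (huw : u ≠ w) : w + 1 = v :=
  ((cycleGraph_adj_iff_eq_add_one.mp hvw).resolve_left
    fun hwv => huw (huv.symm.trans hwv.symm)).symm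

theorem isStarEdgeColoring_cycleGraph {k : ℕ} {c : Sym2 (Fin (n + 2)) → Fin k}
    (hc : ∀ i, IsStarWindow (c s(i, i + 1)) (c s(i + 1, i + 1 + 1))
      (c s(i + 1 + 1, i + 1 + 1 + 1)) (c s(i + 1 + 1 + 1, i + 1 + 1 + 1 + 1))) :
    IsStarEdgeColoring (cycleGraph (n + 2)) c := by
  constructor
  · intro u v w huv huw hvw
    rcases cycleGraph_adj_iff_eq_add_one.mp huv with hv | hu
    · obtain rfl := add_one_eq_of_cycleGraph_adj hv.symm huw hvw
      subst hv
      rw [Sym2.eq_swap (b := w)]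
      exact (hc w).1.symm
    · obtain rfl := eq_add_one_of_cycleGraph_adj hu huw hvw
      subst hu
      rw [Sym2.eq_swap (b := v)]
      exact (hc v).1
  · intro v₀ v₁ v₂ v₃ v₄ h₀₁ h₁₂ h₂₃ h₃₄ hdistinct
    obtain ⟨h₀₂, h₁₃, h₂₄⟩ : v₀ ≠ v₂ ∧ v₁ ≠ v₃ ∧ v₂ ≠ v₄ := by
      rcases hdistinct with hpath | ⟨rfl, hcycle⟩
      · simp_all
      · simp_all [eq_comm]
    rcases cycleGraph_adj_iff_eq_add_one.mp h₀₁ with h₁ | h₀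
    · have h₂ := eq_add_one_of_cycleGraph_adj h₁ h₁₂ h₀₂
      have h₃ := eq_add_one_of_cycleGraph_adj h₂ h₂₃ h₁₃
      have h₄ := eq_add_one_of_cycleGraph_adj h₃ h₃₄ h₂₄
      subst h₄ h₃ h₂ h₁
      exact (hc v₀).three_le_card
    · have h₁ := add_one_eq_of_cycleGraph_adj h₀.symm h₁₂ h₀₂
      have h₂ := add_one_eq_of_cycleGraph_adj h₁ h₂₃ h₁₃
      have h₃ := add_one_eq_of_cycleGraph_adj h₂ h₃₄ h₂₄
      subst h₀ h₁ h₂ h₃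
      simpa only [Sym2.eq_swap] using (hc v₄).symm.three_le_card

theorem injective_cycleGraph_edge : Function.Injective fun i : Fin (n + 3) => s(i, i + 1) := by
  intro i j hij
  rcases Sym2.eq_iff.mp hij with ⟨h, -⟩ | ⟨hi, hj⟩
  · exact h
  · have htwo : (1 + 1 : Fin (n + 3)) = 0 := by
      rw [hi, add_assoc] at hj
      simpa using hj
    have hmod : 2 % (n + 3) = 0 := by simpa [Fin.ext_iff, Fin.val_add] using htwo
    rw [Nat.mod_eq_of_lt (by omega)] at hmod
    exact absurd hmod two_ne_zero

theorem IsStarWord.exists_isStarEdgeColoring_cycleGraph {k : ℕ} {p : Fin 3 → Fin k} {f : ℕ → Fin k}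
    (hf : IsStarWord p (n + 3) f) :
    ∃ c : Sym2 (Fin (n + 3)) → Fin k, IsStarEdgeColoring (cycleGraph (n + 3)) c := by
  have : Nonempty (Fin k) := ⟨f 0⟩
  obtain ⟨c, hc⟩ := injective_cycleGraph_edge.surjective_comp_right fun i : Fin (n + 3) => f i
  refine ⟨c, isStarEdgeColoring_cycleGraph fun i => ?_⟩
  have hc_edge (j : Fin (n + 3)) : c s(j, j + 1) = f j := congrFun hc j
  simpa only [hc_edge] using hf.cyclic_window i

end CycleGraph

/-- For every `n ≥ 3` with `n ≠ 5`, the cycle graph on `n` vertices admits a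
star edge coloring with 3 colors. -/
theorem starChromaticIndex_cycleGraph_le (n : ℕ) (hn : 3 ≤ n) (hn5 : n ≠ 5) :
    starChromaticIndex (SimpleGraph.cycleGraph n) ≤ 3 := by
  obtain ⟨f, hf⟩ := mem_starWordLengths hn hn5
  obtain ⟨m, rfl⟩ := Nat.exists_eq_add_of_le' hn
  exact Nat.sInf_le hf.exists_isStarEdgeColoring_cycleGraph
end

section
/- Let H be the graph on 10 vertices obtained from the 5-cycle v_1 v_2 v_3 v_4 v_5 by attaching one pendant vertex (a new vertex of degree 1 joined by one edge) to each v_i. Then the star chromatic index of H equals 5: H admits no star edge coloring with 4 colors, and it admits a star edge coloring with 5 colors. -/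
/-- The graph obtained from a 5-cycle by attaching one pendant vertex to each
of its five vertices: the vertices `Sum.inl i` form the cycle and `Sum.inr i`
is the pendant vertex attached to `Sum.inl i`. -/
def pendant5Cycle : SimpleGraph (Fin 5 ⊕ Fin 5) :=
  SimpleGraph.fromRel fun x y =>
    (∃ i : Fin 5, x = Sum.inl i ∧ y = Sum.inl (i + 1)) ∨
    (∃ i : Fin 5, x = Sum.inl i ∧ y = Sum.inr i)

/-!
If only four colors are available, two of the five cycle edges share a color, so the cycle is
colored `A B A C D` up to rotation, with `A, B, C, D` distinct because the cycle contains no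
bichromatic path. The pendant edges at the two ends of the path `A B A` cannot be colored `B`, so
the one next to `D` is colored `C` and the one next to `C` is colored `D`; together with the cycle
edges `C` and `D` between them they form a path colored `D C D C`.

With five colors, label both `v_i` and its pendant vertex by `i : ℤ/5` and color each edge by the
sum of the labels of its ends. This even gives different colors to any two edges joined by an edge.
-/

/-- A strong edge coloring: distinct edges that share an endpoint or are joined by an edge receive
distinct colors. Naming the ends so that the two edges meet or are joined at `v` and `w` loses no
generality, as adjacency is symmetric. Strong colorings are the source of star colorings here. -/
def IsStrongEdgeColoring {V α : Type*} (G : SimpleGraph V) (c : Sym2 V → α) : Prop :=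
  ∀ ⦃u v w x : V⦄, G.Adj u v → G.Adj w x → (v = w ∨ G.Adj v w) → s(u, v) ≠ s(w, x) →
    c s(u, v) ≠ c s(w, x)

section StarEdgeColoring

variable {V : Type*} {G : SimpleGraph V} {k l : ℕ}

theorem IsStrongEdgeColoring.isStarEdgeColoring {c : Sym2 V → Fin k}
    (hc : IsStrongEdgeColoring G c) : IsStarEdgeColoring G c := by
  refine ⟨fun u v w huv huw hvw ↦ ?_, fun v₀ v₁ v₂ v₃ v₄ h₀₁ h₁₂ h₂₃ _ hpath ↦ ?_⟩
  · rw [Sym2.eq_swap (a := u)]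
    exact hc huv.symm huw (.inl rfl) (by grind)
  · obtain ⟨h₀₂, h₀₃, h₁₃⟩ : v₀ ≠ v₂ ∧ v₀ ≠ v₃ ∧ v₁ ≠ v₃ := by grind
    have hfirst : c s(v₀, v₁) ≠ c s(v₁, v₂) := hc h₀₁ h₁₂ (.inl rfl) (by grind)
    have houter : c s(v₀, v₁) ≠ c s(v₂, v₃) := hc h₀₁ h₂₃ (.inr h₁₂) (by grind)
    have hlast : c s(v₁, v₂) ≠ c s(v₂, v₃) := hc h₁₂ h₂₃ (.inl rfl) (by grind)
    calc
      3 = ({c s(v₀, v₁), c s(v₁, v₂), c s(v₂, v₃)} : Finset (Fin k)).card :=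
        (Finset.card_eq_three.mpr ⟨_, _, _, hfirst, houter, hlast, rfl⟩).symm
      _ ≤ _ := Finset.card_le_card (by grind)

namespace IsStarEdgeColoring

theorem comp_injective {c : Sym2 V → Fin k} (hc : IsStarEdgeColoring G c) {f : Fin k → Fin l}
    (hf : Function.Injective f) : IsStarEdgeColoring G (f ∘ c) := by
  refine ⟨fun u v w huv huw hvw ↦ hf.ne (hc.1 u v w huv huw hvw),
    fun v₀ v₁ v₂ v₃ v₄ h₀₁ h₁₂ h₂₃ h₃₄ hpath ↦ ?_⟩
  have hcard := hc.2 v₀ v₁ v₂ v₃ v₄ h₀₁ h₁₂ h₂₃ h₃₄ hpath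
  rw [← Finset.card_image_of_injective _ hf] at hcard
  simpa [Finset.image_insert] using hcard

theorem apply_ne_of_adj {c : Sym2 V → Fin k} (hc : IsStarEdgeColoring G c) {u v w : V}
    (huv : G.Adj u v) (hvw : G.Adj v w) (huw : u ≠ w) : c s(u, v) ≠ c s(v, w) := by
  rw [Sym2.eq_swap (a := u)]
  exact hc.1 v u w huv.symm hvw huw

theorem apply_ne_of_path {c : Sym2 V → Fin k} (hc : IsStarEdgeColoring G c) {v₀ v₁ v₂ v₃ v₄ : V}
    (h₀₁ : G.Adj v₀ v₁) (h₁₂ : G.Adj v₁ v₂) (h₂₃ : G.Adj v₂ v₃) (h₃₄ : G.Adj v₃ v₄)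
    (hnodup : [v₀, v₁, v₂, v₃, v₄].Nodup) (heq : c s(v₀, v₁) = c s(v₂, v₃)) :
    c s(v₁, v₂) ≠ c s(v₃, v₄) := by
  intro heq'
  have hcard := hc.2 v₀ v₁ v₂ v₃ v₄ h₀₁ h₁₂ h₂₃ h₃₄ (.inl hnodup)
  have hpair : ({c s(v₂, v₃), c s(v₃, v₄), c s(v₂, v₃), c s(v₃, v₄)} : Finset (Fin k)) =
      {c s(v₂, v₃), c s(v₃, v₄)} := by grind
  rw [heq, heq', hpair] at hcard
  exact absurd (hcard.trans Finset.card_le_two) (by decide)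

theorem apply_ne_of_fiveCycle_of_pendants {c : Sym2 V → Fin 4} (hc : IsStarEdgeColoring G c)
    {v₀ v₁ v₂ v₃ v₄ x y : V} (h₀₁ : G.Adj v₀ v₁) (h₁₂ : G.Adj v₁ v₂) (h₂₃ : G.Adj v₂ v₃)
    (h₃₄ : G.Adj v₃ v₄) (h₄₀ : G.Adj v₄ v₀) (hx : G.Adj x v₀) (hy : G.Adj v₃ y)
    (hnodup : [v₀, v₁, v₂, v₃, v₄, x, y].Nodup) : c s(v₀, v₁) ≠ c s(v₂, v₃) := by
  intro hA
  have hAB : c s(v₀, v₁) ≠ c s(v₁, v₂) := hc.apply_ne_of_adj h₀₁ h₁₂ (by grind)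
  have hAC : c s(v₂, v₃) ≠ c s(v₃, v₄) := hc.apply_ne_of_adj h₂₃ h₃₄ (by grind)
  have hAD : c s(v₄, v₀) ≠ c s(v₀, v₁) := hc.apply_ne_of_adj h₄₀ h₀₁ (by grind)
  have hCD : c s(v₃, v₄) ≠ c s(v₄, v₀) := hc.apply_ne_of_adj h₃₄ h₄₀ (by grind)
  have hBC : c s(v₁, v₂) ≠ c s(v₃, v₄) :=
    hc.apply_ne_of_path h₀₁ h₁₂ h₂₃ h₃₄ (by grind) hA
  have hDB : c s(v₄, v₀) ≠ c s(v₁, v₂) :=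
    fun hDB ↦ hc.apply_ne_of_path h₄₀ h₀₁ h₁₂ h₂₃ (by grind) hDB hA
  have hxC : c s(x, v₀) = c s(v₃, v₄) := by
    have hxA : c s(x, v₀) ≠ c s(v₀, v₁) := hc.apply_ne_of_adj hx h₀₁ (by grind)
    have hxD : c s(v₄, v₀) ≠ c s(v₀, x) := hc.apply_ne_of_adj h₄₀ hx.symm (by grind)
    have hxB : c s(x, v₀) ≠ c s(v₁, v₂) :=
      fun hxB ↦ hc.apply_ne_of_path hx h₀₁ h₁₂ h₂₃ (by grind) hxB hA
    rw [Sym2.eq_swap (a := v₀)] at hxD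
    omega
  have hyD : c s(v₃, y) = c s(v₄, v₀) := by
    have hyA : c s(v₂, v₃) ≠ c s(v₃, y) := hc.apply_ne_of_adj h₂₃ hy (by grind)
    have hyC : c s(y, v₃) ≠ c s(v₃, v₄) := hc.apply_ne_of_adj hy.symm h₃₄ (by grind)
    have hyB : c s(v₁, v₂) ≠ c s(v₃, y) :=
      hc.apply_ne_of_path h₀₁ h₁₂ h₂₃ hy (by grind) hA
    rw [Sym2.eq_swap (a := y)] at hyC
    omega
  rw [Sym2.eq_swap] at hxC hyD
  exact hc.apply_ne_of_path hy.symm h₃₄ h₄₀ hx.symm (by grind) hyD hxC.symm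

end IsStarEdgeColoring

theorem starChromaticIndex_eq_succ_iff :
    starChromaticIndex G = k + 1 ↔
      (∃ c : Sym2 V → Fin (k + 1), IsStarEdgeColoring G c) ∧
        ¬ ∃ c : Sym2 V → Fin k, IsStarEdgeColoring G c := by
  refine Nat.sInf_upward_closed_eq_succ_iff ?_ k
  rintro m n hmn ⟨c, hc⟩
  exact ⟨_, hc.comp_injective (Fin.castLE_injective hmn)⟩

end StarEdgeColoring

theorem exists_apply_eq_apply_add_two {α : Type*} [Fintype α] (hα : Fintype.card α < 5)
    {f : Fin 5 → α} (hf : ∀ i, f i ≠ f (i + 1)) : ∃ i, f i = f (i + 2) := by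
  obtain ⟨i, j, hij, hfij⟩ := Fintype.exists_ne_map_eq_of_card_lt f (by simpa using hα)
  obtain rfl | rfl | rfl | rfl : j = i + 1 ∨ j = i + 2 ∨ i = j + 2 ∨ i = j + 1 := by omega
  · exact absurd hfij (hf i)
  · exact ⟨i, hfij⟩
  · exact ⟨j, hfij.symm⟩
  · exact absurd hfij.symm (hf j)

namespace pendant5Cycle

open Sum

variable {i j : Fin 5}

@[simp]
theorem adj_inl_inl : pendant5Cycle.Adj (inl i) (inl j) ↔ j = i + 1 ∨ i = j + 1 := by
  simp only [pendant5Cycle, SimpleGraph.fromRel_adj]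
  grind

@[simp]
theorem adj_inl_inr : pendant5Cycle.Adj (inl i) (inr j) ↔ i = j := by
  simp [pendant5Cycle, eq_comm]

@[simp]
theorem adj_inr_inl : pendant5Cycle.Adj (inr i) (inl j) ↔ i = j := by
  rw [SimpleGraph.adj_comm, adj_inl_inr, eq_comm]

@[simp]
theorem not_adj_inr_inr : ¬ pendant5Cycle.Adj (inr i) (inr j) := by
  simp [pendant5Cycle]

/-- The label in `ℤ/5` of a vertex: the projection of `pendant5Cycle` onto its cycle, which sends
the pendant vertex `inr i` to `i`. Adding labels along edges yields the coloring `labelSum`. -/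
def label : Fin 5 ⊕ Fin 5 → Fin 5
  | inl i => i
  | inr i => i

theorem eq_of_adj_of_label_eq {u v w : Fin 5 ⊕ Fin 5} (hu : pendant5Cycle.Adj v u)
    (hw : pendant5Cycle.Adj v w) (h : label u = label w) : u = w := by
  rcases u with i | i <;> rcases v with j | j <;> rcases w with m | m <;>
    grind [label, adj_inl_inl, adj_inl_inr, adj_inr_inl, not_adj_inr_inr]

-- The labels change by some `a, b, d ∈ {0, ±1}` along the walk, with `a + 2 b + d = 0`. If
-- `b = ±1`, then `a = d = -b`; if `b = 0`, then `v` or `w` is pendant, so `a = d = 0`.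
theorem label_eq_of_label_add_eq {u v w x : Fin 5 ⊕ Fin 5} (huv : pendant5Cycle.Adj u v)
    (hvw : pendant5Cycle.Adj v w) (hwx : pendant5Cycle.Adj w x)
    (h : label u + label v = label w + label x) : label u = label w := by
  rcases u with i | i <;> rcases v with j | j <;> rcases w with m | m <;> rcases x with n | n <;>
    grind [label, adj_inl_inl, adj_inl_inr, adj_inr_inl, not_adj_inr_inr]

/-- The edge coloring by the sum, modulo 5, of the labels of the two ends; it witnesses that five
colors suffice. -/
def labelSum : Sym2 (Fin 5 ⊕ Fin 5) → Fin 5 :=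
  Sym2.lift ⟨fun x y ↦ label x + label y, fun _ _ ↦ add_comm _ _⟩

theorem isStrongEdgeColoring_labelSum : IsStrongEdgeColoring pendant5Cycle labelSum := by
  intro u v w x huv hwx hvw hne (h : label u + label v = label w + label x)
  apply hne
  obtain rfl | hvw := hvw
  · rw [add_comm, add_left_cancel_iff] at h
    rw [eq_of_adj_of_label_eq huv.symm hwx h, Sym2.eq_swap]
  · have huw : label u = label w := label_eq_of_label_add_eq huv hvw hwx h
    rw [huw, add_left_cancel_iff] at h
    rw [eq_of_adj_of_label_eq huv.symm hvw huw, eq_of_adj_of_label_eq hvw.symm hwx h]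

theorem not_isStarEdgeColoring_four (c : Sym2 (Fin 5 ⊕ Fin 5) → Fin 4) :
    ¬ IsStarEdgeColoring pendant5Cycle c := by
  intro hc
  have hproper (i : Fin 5) :
      c s(inl i, inl (i + 1)) ≠ c s(inl (i + 1), inl (i + 1 + 1)) :=
    hc.apply_ne_of_adj (by simp) (by simp) (inl_injective.ne (by omega))
  obtain ⟨i, hi⟩ := exists_apply_eq_apply_add_two (by simp) hproper
  have hnodup : ∀ i : Fin 5, [inl i, inl (i + 1), inl (i + 2), inl (i + 2 + 1), inl (i + 4), inr i,
      inr (i + 2 + 1)].Nodup := by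
    decide
  exact hc.apply_ne_of_fiveCycle_of_pendants (by simp) (adj_inl_inl.mpr (by omega)) (by simp)
    (adj_inl_inl.mpr (by omega)) (adj_inl_inl.mpr (by omega)) (by simp) (by simp) (hnodup i) hi

end pendant5Cycle

/-- The star chromatic index of the 5-cycle with a pendant edge at every vertex
equals 5: it admits no star edge coloring with 4 colors, but admits one with
5 colors. -/
theorem starChromaticIndex_pendant5Cycle :
    starChromaticIndex pendant5Cycle = 5 ∧
    (¬ ∃ c : Sym2 (Fin 5 ⊕ Fin 5) → Fin 4, IsStarEdgeColoring pendant5Cycle c) ∧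
    (∃ c : Sym2 (Fin 5 ⊕ Fin 5) → Fin 5, IsStarEdgeColoring pendant5Cycle c) := by
  have hfive := pendant5Cycle.isStrongEdgeColoring_labelSum.isStarEdgeColoring
  have hfour : ¬ ∃ c : Sym2 (Fin 5 ⊕ Fin 5) → Fin 4, IsStarEdgeColoring pendant5Cycle c :=
    not_exists.mpr pendant5Cycle.not_isStarEdgeColoring_four
  exact ⟨starChromaticIndex_eq_succ_iff.mpr ⟨⟨_, hfive⟩, hfour⟩, hfour, _, hfive⟩
end

section
/- Let n ≥ 3 and let G be a simple graph obtained from the cycle v_0 v_1 … v_{n−1} by adding a set D of chords (edges between non-consecutive cycle vertices) that are pairwise non-crossing, i.e., for any two chords {v_a, v_b} and {v_c, v_d} in D, it is not the case that exactly one of v_c, v_d lies strictly inside one of the two arcs of the cycle determined by v_a and v_b, and additionally attaching at most one pendant vertex (a new degree-1 vertex joined by one edge) to each cycle vertex. If G has maximum degree at most 3, then G admits a star edge coloring with 5 colors, i.e., χ'_s(G) ≤ 5. (This is the statement of the theorem 'every subcubic outerplanar graph has star chromatic index at most 5' for graphs with no nontrivial bridge, using the combinatorial description of 2-connected outerplanar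 graphs as cycles with pairwise non-crossing chords.) -/
/-- The graph obtained from the cycle `v_0 v_1 … v_{n-1}` by adding the set
`D` of chords (each chord is recorded as a pair `(a, b)` with `a < b`) and
attaching a pendant vertex to the cycle vertex `i` exactly when `P i` holds. -/
def cycleChordPendant (n : ℕ) [NeZero n] (D : Set (Fin n × Fin n)) (P : Fin n → Prop) :
    SimpleGraph (Fin n ⊕ {i : Fin n // P i}) :=
  SimpleGraph.fromRel fun x y =>
    (∃ i : Fin n, x = Sum.inl i ∧ y = Sum.inl (i + 1)) ∨
    (∃ p ∈ D, x = Sum.inl p.1 ∧ y = Sum.inl p.2) ∨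
    (∃ j : {i : Fin n // P i}, x = Sum.inl j.1 ∧ y = Sum.inr j)

/-!
Give each cycle vertex three colors, those of its two cycle edges and of its third edge. They form a
star edge coloring if the three colors at each vertex are distinct, the two ends of a chord have no
color in common but that of the chord, and of the two cycle edges at a vertex at least one has a
color that does not occur at the far end of the other.

Once the ends of a chord are colored compatibly, the vertices under it can be colored recursively.
The face just below the chord is bounded by links, which are chords or single vertices, with cycle
edges between them. The links are colored from left to right, and five colors leave enough freedom
to keep the color that leaves a link different from the one that has to enter the right end of the
chord. With that invariant the last two links can always be completed; as colors may be permuted,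
this is a finite check. The fillings under different chords do not interact, since each of them
already takes care of the star condition at both ends of its chord.

If vertex `0` is an end of a chord, the cycle consists of the two intervals that this chord cuts
off. Otherwise it is an interval from `0` to `n` with the same colors at both ends, which is filled
in the same way.
-/

/-- The colors seen at a vertex of a cycle, in the order in which the edges leave it: the cycle edge
to its predecessor, the third edge (a chord or a pendant edge), and the cycle edge to its successor.
A vertex without third edge also gets a third color, which it then does not use. -/
@[ext]
structure VertexColors (α : Type*) where
  left : α
  third : α
  right : α
  deriving DecidableEq, Fintype

namespace VertexColors

variable {α β : Type*} {u v w : VertexColors α}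

/-- The set of colors that occur at a vertex. -/
def palette (v : VertexColors α) : Set α := {v.left, v.third, v.right}

theorem mem_palette {x : α} : x ∈ v.palette ↔ x = v.left ∨ x = v.third ∨ x = v.right := Iff.rfl

/-- The three colors at a vertex are distinct. -/
def Proper (v : VertexColors α) : Prop :=
  v.left ≠ v.third ∧ v.left ≠ v.right ∧ v.third ≠ v.right

/-- For consecutive vertices `u`, `v`, `w` of a cycle: no bichromatic path or cycle with four edges
has the two cycle edges at `v` in its middle. -/
def StarAt (u v w : VertexColors α) : Prop :=
  v.right ∉ u.palette ∨ v.left ∉ w.palette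

/-- The colors at the two ends of a chord fit together. Asking that they agree on the chord only
excludes every bichromatic path or cycle with four edges whose two middle edges meet at an end of
the chord and include the chord. -/
def ChordCompatible (v w : VertexColors α) : Prop :=
  v.third = w.third ∧ v.left ∉ w.palette ∧ v.right ∉ w.palette

/-- Apply a map to all colors at a vertex. -/
def map (f : α → β) (v : VertexColors α) : VertexColors β :=
  ⟨f v.left, f v.third, f v.right⟩

section Decidable

variable [DecidableEq α]

instance (v : VertexColors α) : DecidablePred (· ∈ v.palette) :=
  fun _ => decidable_of_iff' _ mem_palette

instance : DecidablePred (Proper (α := α)) :=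
  fun _ => inferInstanceAs (Decidable (_ ∧ _))

instance : DecidableRel (ChordCompatible (α := α)) :=
  fun _ _ => inferInstanceAs (Decidable (_ ∧ _))

end Decidable

theorem ChordCompatible.symm (h : v.ChordCompatible w) (hw : w.Proper) :
    w.ChordCompatible v := by
  simp only [ChordCompatible, mem_palette, Proper] at h hw ⊢
  grind

section Map

variable {f : α → β} (hf : f.Injective)
include hf

theorem map_mem_palette_map {x : α} : f x ∈ (v.map f).palette ↔ x ∈ v.palette := by
  simp only [mem_palette, map, hf.eq_iff]

theorem Proper.map (h : v.Proper) : (v.map f).Proper :=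
  ⟨hf.ne h.1, hf.ne h.2.1, hf.ne h.2.2⟩

theorem StarAt.map (h : StarAt u v w) : StarAt (u.map f) (v.map f) (w.map f) :=
  h.imp (mt (map_mem_palette_map hf).1) (mt (map_mem_palette_map hf).1)

theorem ChordCompatible.map (h : v.ChordCompatible w) : (v.map f).ChordCompatible (w.map f) :=
  ⟨congrArg f h.1, mt (map_mem_palette_map hf).1 h.2.1, mt (map_mem_palette_map hf).1 h.2.2⟩

end Map

theorem exists_notMem_palette_ne (v : VertexColors (Fin 5)) (y : Fin 5) :
    ∃ x, x ∉ v.palette ∧ x ≠ y := by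
  classical
  obtain ⟨x, hx⟩ := Finset.exists_mem_notMem_of_card_lt_card (s := {v.left, v.third, v.right, y})
    (t := Finset.univ) (Finset.card_le_four.trans_lt (by decide))
  simp only [Finset.mem_insert, Finset.mem_singleton, not_or] at hx
  exact ⟨x, by simp only [mem_palette]; tauto, hx.2.2.2.2⟩

theorem Proper.exists_perm_map_eq (hv : v.Proper) (hw : w.Proper) :
    ∃ σ : Equiv.Perm α, v.map σ = w := by
  have vec_injective {x : VertexColors α} (hx : x.Proper) :
      Function.Injective ![x.left, x.third, x.right] := by
    obtain ⟨h₁, h₂, h₃⟩ := hx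
    simp [Function.Injective, Fin.forall_fin_succ, h₁, h₂, h₃, h₁.symm, h₂.symm, h₃.symm]
  obtain ⟨σ, hσ⟩ :=
    Equiv.Perm.exists_extending_pair _ _ (vec_injective hv) (vec_injective hw)
  exact ⟨σ, VertexColors.ext (hσ 0) (hσ 1) (hσ 2)⟩

end VertexColors

/-- A set of pairwise non-crossing chords between non-consecutive integers, no two of which share
an end. A chord is recorded as `D a b` with `a < b`. -/
structure IsNoncrossingMatching (D : ℕ → ℕ → Prop) : Prop where
  add_one_lt {a b : ℕ} : D a b → a + 1 < b
  eq_of_common_end {a b c : ℕ} : (D a b ∨ D b a) → (D a c ∨ D c a) → b = c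
  not_cross {a b c d : ℕ} : D a b → D c d → ¬(a < c ∧ c < b ∧ b < d)

/-- Every chord with an end strictly between `i` and `j` has its other end there, too. -/
def IsClosedInterval (D : ℕ → ℕ → Prop) (i j : ℕ) : Prop :=
  ∀ ⦃a b⦄, D a b → (i < a ∧ a < j ↔ i < b ∧ b < j)

/-- Every nontrivial face of the chord diagram inside a chord `{i, j}` is bounded by a path from
`i` to `j` in which edges of the cycle alternate with links: a link is either a single vertex
without inner chord, or a chord. -/
inductive FaceLink
  | vertex
  | chord

/-- The link `κ` leads from `a` to `b`. -/
def FaceLink.Spans (D : ℕ → ℕ → Prop) (a b : ℕ) : FaceLink → Prop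
  | vertex => a = b ∧ ∀ d, ¬D a d
  | chord => D a b

theorem IsClosedInterval.exists_spans {D : ℕ → ℕ → Prop} {i j : ℕ} (hcl : IsClosedInterval D i j)
    (hij : i + 1 < j) :
    ∃ κ b, FaceLink.Spans D (i + 1) b κ ∧ i < b ∧ b < j := by
  by_cases h : ∃ b, D (i + 1) b
  · obtain ⟨b, hb⟩ := h
    have := hcl hb
    exact ⟨.chord, b, hb, by omega, by omega⟩
  · exact ⟨.vertex, i + 1, ⟨rfl, not_exists.1 h⟩, by omega, hij⟩

namespace IsNoncrossingMatching

variable {D : ℕ → ℕ → Prop} {a b c d i j : ℕ} {κ : FaceLink} (hD : IsNoncrossingMatching D)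
include hD

theorem eq_or_disjoint_or_nested (hab : D a b) (hcd : D c d) :
    (a = c ∧ b = d) ∨ b < c ∨ d < a ∨ (a < c ∧ d < b) ∨ (c < a ∧ b < d) := by
  have := hD.add_one_lt hab
  have := hD.add_one_lt hcd
  have := hD.not_cross hab hcd
  have := hD.not_cross hcd hab
  have hac : a = c → b = d := by rintro rfl; exact hD.eq_of_common_end (.inl hab) (.inl hcd)
  have hbd : b = d → a = c := by rintro rfl; exact hD.eq_of_common_end (.inr hab) (.inr hcd)
  have had : a ≠ d := by rintro rfl; have := hD.eq_of_common_end (.inl hab) (.inr hcd); omega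
  have hbc : b ≠ c := by rintro rfl; have := hD.eq_of_common_end (.inr hab) (.inl hcd); omega
  omega

theorem isClosedInterval_of_chord (hij : D i j) : IsClosedInterval D i j := fun _ _ hab => by
  have := hD.eq_or_disjoint_or_nested hij hab
  have := hD.add_one_lt hab
  omega

theorem isClosedInterval_of_spans (hcl : IsClosedInterval D i j) (hκ : κ.Spans D (i + 1) b)
    (hib : i < b) (hbj : b < j) : IsClosedInterval D b j := fun a c hac => by
  have := hcl hac
  have := hD.add_one_lt hac
  cases κ with
  | vertex =>
    obtain ⟨rfl, hb⟩ := hκ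
    have : a ≠ i + 1 := by rintro rfl; exact hb _ hac
    omega
  | chord =>
    have := hD.eq_or_disjoint_or_nested hκ hac
    omega

theorem eq_or_eq_of_spans (hcl : IsClosedInterval D i j) (hκ : κ.Spans D (i + 1) b)
    (hbj : b < j) (hac : D a c) (ha : i ≤ a) (hab : a ≤ b) (hbc : b ≤ c) (hc : c ≤ j) :
    (a = i + 1 ∧ c = b) ∨ (a = i ∧ c = j) := by
  have := hcl hac
  have := hD.add_one_lt hac
  cases κ with
  | vertex =>
    obtain ⟨rfl, hb⟩ := hκ
    have : a ≠ i + 1 := by rintro rfl; exact hb _ hac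
    omega
  | chord =>
    have := hD.eq_or_disjoint_or_nested hκ hac
    omega

end IsNoncrossingMatching

open VertexColors

section IntervalColoring

variable {α : Type*} {D : ℕ → ℕ → Prop} {L R : Prop} {i b j : ℕ} {s t u w : VertexColors α}

/-- `c` colors the edges at the vertices `i, …, j` of a path with chords `D`. Nothing is asked at
the end vertices `i` and `j` alone, nor for a chord that joins them: both are fixed in advance when
the colors inside the interval are chosen. -/
structure IsIntervalColoring (D : ℕ → ℕ → Prop) (i j : ℕ) (c : ℕ → VertexColors α) : Prop where
  right_eq_left : ∀ k, i ≤ k → k < j → (c k).right = (c (k + 1)).left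
  proper : ∀ k, i < k → k < j → (c k).Proper
  starAt : ∀ k, i < k → k < j → StarAt (c (k - 1)) (c k) (c (k + 1))
  chordCompatible : ∀ a b, D a b → i ≤ a → b ≤ j → (a = i → b ≠ j) → (c a).ChordCompatible (c b)

namespace IsIntervalColoring

variable {β : Type*} {c d : ℕ → VertexColors α}

theorem congr (hD : IsNoncrossingMatching D) (hc : IsIntervalColoring D i j c)
    (h : ∀ k, i ≤ k → k ≤ j → c k = d k) : IsIntervalColoring D i j d where
  right_eq_left k hi hj := by
    rw [← h k hi hj.le, ← h (k + 1) (by omega) hj]; exact hc.right_eq_left k hi hj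
  proper k hi hj := h k hi.le hj.le ▸ hc.proper k hi hj
  starAt k hi hj := by
    rw [← h (k - 1) (by omega) (by omega), ← h k hi.le hj.le, ← h (k + 1) (by omega) hj]
    exact hc.starAt k hi hj
  chordCompatible a b hab hi hj hne := by
    have := hD.add_one_lt hab
    rw [← h a hi (by omega), ← h b (by omega) hj]
    exact hc.chordCompatible a b hab hi hj hne

theorem append (hD : IsNoncrossingMatching D) (h₁ : IsIntervalColoring D i b c)
    (h₂ : IsIntervalColoring D b j c) (hb : (c b).Proper)
    (hstar : StarAt (c (b - 1)) (c b) (c (b + 1)))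
    (hib : D i b → (c i).ChordCompatible (c b)) (hbj : D b j → (c b).ChordCompatible (c j))
    (hover : ∀ x y, D x y → i ≤ x → x < b → b < y → y ≤ j → x = i ∧ y = j) :
    IsIntervalColoring D i j c where
  right_eq_left k hi hj :=
    (lt_or_ge k b).elim (h₁.right_eq_left k hi) fun hk => h₂.right_eq_left k hk hj
  proper k hi hj := by
    rcases lt_trichotomy k b with hk | rfl | hk
    exacts [h₁.proper k hi hk, hb, h₂.proper k hk hj]
  starAt k hi hj := by
    rcases lt_trichotomy k b with hk | rfl | hk
    exacts [h₁.starAt k hi hk, hstar, h₂.starAt k hk hj]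
  chordCompatible x y hxy hx hy hne := by
    have := hD.add_one_lt hxy
    by_cases hyb : y ≤ b
    · by_cases hends : x = i ∧ y = b
      · obtain ⟨rfl, rfl⟩ := hends
        exact hib hxy
      · exact h₁.chordCompatible x y hxy hx hyb (by tauto)
    · by_cases hxb : b ≤ x
      · by_cases hends : x = b ∧ y = j
        · obtain ⟨rfl, rfl⟩ := hends
          exact hbj hxy
        · exact h₂.chordCompatible x y hxy hxb hy (by tauto)
      · have := hover x y hxy hx (by omega) (by omega) hy
        exact absurd this.2 (hne this.1)

theorem map {f : α → β} (hf : f.Injective) (hc : IsIntervalColoring D i j c) :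
    IsIntervalColoring D i j fun k => (c k).map f where
  right_eq_left k hi hj := congrArg f (hc.right_eq_left k hi hj)
  proper k hi hj := (hc.proper k hi hj).map hf
  starAt k hi hj := (hc.starAt k hi hj).map hf
  chordCompatible a b hab hi hj hne := (hc.chordCompatible a b hab hi hj hne).map hf

end IsIntervalColoring

/-- The interval from `i` to `j` has a coloring with colors `s` at `i` and `t` at `j`. The flags `L`
and `R` record that the color entering at `i` does not recur at `i + 1` and that the color leaving
at `j` does not recur at `j - 1`: one of the two is what the star condition at a common end of two
adjacent intervals requires. -/
def Joinable (D : ℕ → ℕ → Prop) (L R : Prop) (i j : ℕ) (s t : VertexColors α) : Prop :=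
  ∃ c, c i = s ∧ c j = t ∧ IsIntervalColoring D i j c ∧
    (L → s.left ∉ (c (i + 1)).palette) ∧ (R → t.right ∉ (c (j - 1)).palette)

namespace Joinable

theorem edge (hD : IsNoncrossingMatching D) (hst : s.right = t.left) (hL : L → s.left ∉ t.palette)
    (hR : R → t.right ∉ s.palette) : Joinable D L R i (i + 1) s t := by
  refine ⟨fun k => if k = i then s else t, if_pos rfl, if_neg (by omega), ⟨?_, ?_, ?_, ?_⟩,
    fun h => ?_, fun h => ?_⟩
  · intro k hi hj
    obtain rfl : k = i := by omega
    simpa using hst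
  · omega
  · omega
  · intro a b hab
    have := hD.add_one_lt hab
    omega
  · simpa using hL h
  · simpa using hR h

theorem map {β : Type*} {f : α → β} (hf : f.Injective) (h : Joinable D L R i j s t) :
    Joinable D L R i j (s.map f) (t.map f) := by
  obtain ⟨c, rfl, rfl, hc, hL, hR⟩ := h
  exact ⟨_, rfl, rfl, hc.map hf, fun h => mt (map_mem_palette_map hf).1 (hL h),
    fun h => mt (map_mem_palette_map hf).1 (hR h)⟩

theorem trans {L' R' : Prop} (hD : IsNoncrossingMatching D) (hi : i < b) (hj : b < j)
    (h₁ : Joinable D L R i b s u) (h₂ : Joinable D L' R' b j u t) (hu : u.Proper) (hRL : R ∨ L')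
    (hib : D i b → s.ChordCompatible u) (hbj : D b j → u.ChordCompatible t)
    (hover : ∀ x y, D x y → i ≤ x → x < b → b < y → y ≤ j → x = i ∧ y = j) :
    Joinable D L R' i j s t := by
  obtain ⟨c, rfl, rfl, hc, hcL, hcR⟩ := h₁
  obtain ⟨d, hdb, rfl, hd, hdL, hdR⟩ := h₂
  let e k := if k ≤ b then c k else d k
  have hec k (hk : k ≤ b) : e k = c k := if_pos hk
  have hed k (hk : b ≤ k) : e k = d k := by
    rcases hk.eq_or_lt with rfl | hk
    · rw [hec _ le_rfl, hdb]
    · exact if_neg (by omega)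
  refine ⟨e, hec i hi.le, hed j hj.le,
    .append hD (hc.congr hD fun k _ hk => (hec k hk).symm)
      (hd.congr hD fun k hk _ => (hed k hk).symm) ?_ ?_ ?_ ?_ hover, ?_, ?_⟩
  · rwa [hec b le_rfl]
  · rw [hec (b - 1) (by omega), hec b le_rfl, hed (b + 1) (by omega)]
    exact hRL.imp hcR hdL
  · rwa [hec i hi.le, hec b le_rfl]
  · rwa [hec b le_rfl, hed j hj.le]
  · rwa [hec (i + 1) hi]
  · rwa [hed (j - 1) (by omega)]

end Joinable

/-- Every compatible choice of colors at the ends `a` and `b` of a chord extends to the vertices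
between them. -/
def ChordFillable (α : Type*) (D : ℕ → ℕ → Prop) (a b : ℕ) : Prop :=
  ∀ u w : VertexColors α, u.Proper → w.Proper → u.ChordCompatible w → Joinable D True True a b u w

namespace FaceLink

/-- Colors `w` at the last vertex of a link can follow colors `s` at the vertex before the link.
The flag `L` is as in `Joinable`. -/
def Step : FaceLink → Prop → VertexColors α → VertexColors α → Prop
  | vertex, L, s, w => s.right = w.left ∧ w.Proper ∧ (L → s.left ∉ w.palette)
  | chord, L, s, w => w.Proper ∧ ∃ u : VertexColors α,
      s.right = u.left ∧ u.Proper ∧ u.ChordCompatible w ∧ (L → s.left ∉ u.palette)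

/-- The star condition at the last vertex of a link, with colors `w`, holds regardless of the
vertex after it. Behind a chord this is always the case, because the interval under the chord is
filled that way. -/
def Seals : FaceLink → VertexColors α → VertexColors α → Prop
  | vertex, s, w => w.right ∉ s.palette
  | chord, _, _ => True

/-- The link from `s` to `w` can be the last one before a vertex with colors `t`. -/
def Closes (κ : FaceLink) (s w t : VertexColors α) : Prop :=
  w.right = t.left ∧ t.right ∉ w.palette ∧ (κ.Seals s w ∨ w.left ∉ t.palette)

theorem Step.proper {κ : FaceLink} (h : κ.Step L s w) : w.Proper := by
  cases κ
  exacts [h.2.1, h.1]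

end FaceLink

namespace Joinable

variable {κ : FaceLink}

theorem of_step (hD : IsNoncrossingMatching D) (hcl : IsClosedInterval D i j)
    (hfill : ∀ a b, D a b → i < a → b < j → ChordFillable α D a b)
    (hκ : κ.Spans D (i + 1) b) (hbj : b < j) (hsw : κ.Step L s w) :
    Joinable D L (κ.Seals s w) i b s w := by
  cases κ with
  | vertex =>
    obtain ⟨rfl, -⟩ := hκ
    exact edge hD hsw.1 hsw.2.2 id
  | chord =>
    obtain ⟨hw, u, hsu, hu, huw, hL⟩ := hsw
    have := hD.add_one_lt hκ
    refine (edge hD hsu hL False.elim).trans hD (by omega) (by omega)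
      (hfill _ _ hκ (by omega) hbj u w hu hw huw) hu (.inr trivial) (fun h => ?_) (fun _ => huw)
      fun x y hxy _ _ _ _ => ?_
    · have := hD.add_one_lt h
      omega
    · have := hD.eq_or_eq_of_spans hcl hκ hbj hxy
      have := hD.eq_or_disjoint_or_nested hκ hxy
      have := hcl hxy
      omega

theorem cons {L' : Prop} (hD : IsNoncrossingMatching D) (hcl : IsClosedInterval D i j)
    (hfill : ∀ a b, D a b → i < a → b < j → ChordFillable α D a b)
    (hκ : κ.Spans D (i + 1) b) (hib : i < b) (hbj : b < j) (hsw : κ.Step L s w)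
    (h : Joinable D L' R b j w t) (hseal : κ.Seals s w ∨ L') :
    Joinable D L R i j s t := by
  refine (of_step hD hcl hfill hκ hbj hsw).trans hD hib hbj h hsw.proper hseal
    (fun hx => ?_) (fun hx => ?_) fun x y hxy _ _ _ _ => ?_
  · have := hD.eq_or_eq_of_spans hcl hκ hbj hx
    omega
  · have := hD.eq_or_eq_of_spans hcl hκ hbj hx
    omega
  · have := hD.eq_or_eq_of_spans hcl hκ hbj hxy
    omega

theorem of_closes (hD : IsNoncrossingMatching D) (hcl : IsClosedInterval D i (b + 1))
    (hfill : ∀ x y, D x y → i < x → y < b + 1 → ChordFillable α D x y)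
    (hκ : κ.Spans D (i + 1) b) (hib : i < b) (hsw : κ.Step L s w) (hwt : κ.Closes s w t) :
    Joinable D L True i (b + 1) s t :=
  cons hD hcl hfill hκ hib b.lt_succ_self hsw
    (edge hD hwt.1 (L := ¬κ.Seals s w) hwt.2.2.resolve_left fun _ => hwt.2.1)
    (Classical.em _)

end Joinable

namespace FaceLink

theorem exists_step_closes_of_chordCompatible (κ : FaceLink) (hs : s.Proper) (ht : t.Proper)
    (hst : s.ChordCompatible t) : ∃ w, κ.Step True s w ∧ κ.Closes s w t := by
  simp only [Proper, ChordCompatible, mem_palette] at hs ht hst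
  cases κ with
  | vertex =>
    refine ⟨⟨s.right, s.third, t.left⟩, ?_⟩
    simp only [Step, Closes, Seals, Proper, mem_palette]
    grind
  | chord =>
    refine ⟨⟨s.left, s.third, t.left⟩, ?_⟩
    simp only [Step, Closes, Seals, Proper, ChordCompatible, mem_palette]
    refine ⟨⟨?_, ⟨s.right, s.third, t.right⟩, ?_⟩, ?_⟩ <;> grind

theorem exists_step_right_ne (κ : FaceLink) {s : VertexColors (Fin 5)} (hs : s.Proper)
    (y : Fin 5) : ∃ w, κ.Step True s w ∧ w.right ≠ y := by
  obtain ⟨x, hx, hxy⟩ := s.exists_notMem_palette_ne y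
  obtain ⟨a, ha, hax⟩ := s.exists_notMem_palette_ne x
  simp only [Proper, mem_palette] at hs hx ha
  cases κ with
  | vertex =>
    refine ⟨⟨s.right, s.third, x⟩, ?_⟩
    simp only [Step, Proper, mem_palette]
    grind
  | chord =>
    refine ⟨⟨s.left, s.third, x⟩, ?_⟩
    simp only [Step, Proper, ChordCompatible, mem_palette]
    refine ⟨⟨?_, ⟨s.right, s.third, a⟩, ?_⟩, ?_⟩ <;> grind

theorem exists_chord_step_closes_self {s : VertexColors (Fin 5)} (hs : s.Proper) :
    ∃ w, chord.Step True s w ∧ chord.Closes s w s := by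
  obtain ⟨a, ha, -⟩ := s.exists_notMem_palette_ne s.left
  obtain ⟨b, hb, hba⟩ := s.exists_notMem_palette_ne a
  simp only [Proper, mem_palette] at hs ha hb
  refine ⟨⟨b, s.third, s.left⟩, ?_⟩
  simp only [Step, Closes, Seals, Proper, ChordCompatible, mem_palette]
  refine ⟨⟨?_, ⟨s.right, s.third, a⟩, ?_⟩, ?_⟩ <;> grind

section Decidable

variable [DecidableEq α]

instance [Fintype α] (κ : FaceLink) [Decidable L] : DecidableRel (κ.Step (α := α) L) :=
  fun _ _ => match κ with
    | vertex => inferInstanceAs (Decidable (_ ∧ _ ∧ _))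
    | chord => inferInstanceAs (Decidable (_ ∧ ∃ _, _))

instance (κ : FaceLink) : DecidableRel (κ.Seals (α := α)) :=
  fun _ _ => match κ with
    | vertex => inferInstanceAs (Decidable (¬_))
    | chord => inferInstanceAs (Decidable True)

instance (κ : FaceLink) (s w t : VertexColors α) : Decidable (κ.Closes s w t) :=
  inferInstanceAs (Decidable (_ ∧ _ ∧ _))

end Decidable

-- No choice of the colors `w` and `z` is uniform in `t`, hence the finite search.
theorem exists_two_steps_closes (κ κ' : FaceLink) :
    ∀ t : VertexColors (Fin 5), t.Proper → t.left ≠ 2 → ∃ w, κ.Step True ⟨0, 1, 2⟩ w ∧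
      ∃ z, κ'.Step (¬κ.Seals ⟨0, 1, 2⟩ w) w z ∧ κ'.Closes w z t := by
  cases κ <;> cases κ' <;> decide +kernel

end FaceLink

namespace IsClosedInterval

variable (hD : IsNoncrossingMatching D)
include hD

theorem joinable_of_two_links {i b b' : ℕ} {κ κ' : FaceLink} {s t : VertexColors (Fin 5)}
    (hcl : IsClosedInterval D i (b' + 1))
    (hfill : ∀ x y, D x y → i < x → y < b' + 1 → ChordFillable (Fin 5) D x y)
    (hκ : κ.Spans D (i + 1) b) (hib : i < b) (hκ' : κ'.Spans D (b + 1) b') (hbb' : b < b')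
    (hs : s.Proper) (ht : t.Proper) (hts : t.left ≠ s.right) :
    Joinable D True True i (b' + 1) s t := by
  obtain ⟨σ, rfl⟩ := Proper.exists_perm_map_eq (v := ⟨0, 1, 2⟩) (by decide) hs
  obtain ⟨t, rfl⟩ : ∃ t₀ : VertexColors (Fin 5), t₀.map σ = t :=
    ⟨t.map σ.symm, by simp only [map, Equiv.apply_symm_apply]⟩
  have ht : t.Proper := by
    simpa only [Proper, map, σ.injective.ne_iff] using ht
  obtain ⟨w, hw, z, hz, hzt⟩ :=
    FaceLink.exists_two_steps_closes κ κ' t ht (ne_of_apply_ne σ hts)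
  have hclb := hD.isClosedInterval_of_spans hcl hκ hib (by omega)
  have hzt := Joinable.of_closes hD hclb (fun x y hxy hx => hfill x y hxy (by omega)) hκ' hbb'
    hz hzt
  exact (hzt.cons hD hcl hfill hκ hib (by omega) hw (Classical.em _)).map σ.injective

theorem joinable_of_left_ne_right {i b j : ℕ} {κ : FaceLink} {s t : VertexColors (Fin 5)}
    (hcl : IsClosedInterval D i j)
    (hfill : ∀ x y, D x y → i < x → y < j → ChordFillable (Fin 5) D x y)
    (hκ : κ.Spans D (i + 1) b) (hib : i < b) (hbj : b + 1 < j)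
    (hs : s.Proper) (ht : t.Proper) (hts : t.left ≠ s.right) :
    Joinable D True True i j s t := by
  have hclb := hD.isClosedInterval_of_spans hcl hκ hib (by omega)
  obtain ⟨κ', b', hκ', hbb', hb'j⟩ := hclb.exists_spans hbj
  obtain rfl | hb'j : b' + 1 = j ∨ b' + 1 < j := by omega
  · exact joinable_of_two_links hD hcl hfill hκ hib hκ' hbb' hs ht hts
  · obtain ⟨w, hw, hwt⟩ := κ.exists_step_right_ne hs t.left
    have hwt := joinable_of_left_ne_right hclb (fun x y hxy hx => hfill x y hxy (by omega))
      hκ' hbb' hb'j hw.proper ht hwt.symm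
    exact hwt.cons hD hcl hfill hκ hib (by omega) hw (.inr trivial)
termination_by j - i

end IsClosedInterval

namespace IsNoncrossingMatching

variable (hD : IsNoncrossingMatching D)
include hD

theorem chordFillable {i j : ℕ} (hcl : IsClosedInterval D i j) (hij : i + 1 < j) :
    ChordFillable (Fin 5) D i j := by
  intro s t hs ht hst
  have hfill x y (hxy : D x y) (_ : i < x) (_ : y < j) : ChordFillable (Fin 5) D x y :=
    chordFillable (hD.isClosedInterval_of_chord hxy) (hD.add_one_lt hxy)
  obtain ⟨κ, b, hκ, hib, hbj⟩ := hcl.exists_spans hij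
  obtain rfl | hbj : b + 1 = j ∨ b + 1 < j := by omega
  · obtain ⟨w, hw, hwt⟩ := κ.exists_step_closes_of_chordCompatible hs ht hst
    exact .of_closes hD hcl hfill hκ hib hw hwt
  · exact hcl.joinable_of_left_ne_right hD hfill hκ hib hbj hs ht fun h => hst.2.2 (.inl h.symm)
termination_by j - i

theorem joinable_self {i j : ℕ} {s : VertexColors (Fin 5)} (hcl : IsClosedInterval D i j)
    (hij : i + 2 < j) (hs : s.Proper) : Joinable D True True i j s s := by
  have hfill x y (hxy : D x y) (_ : i < x) (_ : y < j) : ChordFillable (Fin 5) D x y :=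
    hD.chordFillable (hD.isClosedInterval_of_chord hxy) (hD.add_one_lt hxy)
  obtain ⟨κ, b, hκ, hib, hbj⟩ := hcl.exists_spans (by omega)
  obtain rfl | hbj : b + 1 = j ∨ b + 1 < j := by omega
  · cases κ with
    | vertex =>
      obtain ⟨rfl, -⟩ := hκ
      omega
    | chord =>
      obtain ⟨w, hw, hws⟩ := FaceLink.exists_chord_step_closes_self hs
      exact .of_closes hD hcl hfill hκ hib hw hws
  · exact hcl.joinable_of_left_ne_right hD hfill hκ hib hbj hs hs hs.2.1

theorem exists_joinable_self {n : ℕ} (hn : 3 ≤ n) (hlt : ∀ a b, D a b → b < n)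
    (hends : ¬D 0 (n - 1)) :
    ∃ s : VertexColors (Fin 5), s.Proper ∧ Joinable D True True 0 n s s := by
  let s : VertexColors (Fin 5) := ⟨0, 1, 2⟩
  let t : VertexColors (Fin 5) := ⟨3, 1, 4⟩
  have hs : s.Proper := by decide
  have ht : t.Proper := by decide
  have hst : s.ChordCompatible t := by decide
  refine ⟨s, hs, ?_⟩
  by_cases h : ∃ b, D 0 b
  · obtain ⟨b, hb⟩ := h
    have h0b := hD.add_one_lt hb
    have hbn := hlt _ _ hb
    have hcl : IsClosedInterval D b n := fun x y hxy => by
      have := hD.eq_or_disjoint_or_nested hb hxy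
      have := hlt _ _ hxy
      have := hD.add_one_lt hxy
      omega
    have h₁ := hD.chordFillable (hD.isClosedInterval_of_chord hb) h0b s t hs ht hst
    have hbn' : b + 1 ≠ n := by rintro rfl; exact hends hb
    have h₂ := hD.chordFillable hcl (by omega) t s ht hs (hst.symm ht)
    refine h₁.trans hD (by omega) hbn h₂ ht (.inl trivial) (fun _ => hst) (fun _ => hst.symm ht)
      fun x y hxy _ _ _ _ => ?_
    have := hD.eq_or_disjoint_or_nested hb hxy
    omega
  · refine hD.joinable_self (fun x y hxy => ?_) hn hs
    have hx : x ≠ 0 := by rintro rfl; exact h ⟨y, hxy⟩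
    have := hlt _ _ hxy
    have := hD.add_one_lt hxy
    omega

end IsNoncrossingMatching

end IntervalColoring

section Cycle

variable {α : Type*} {n : ℕ} [NeZero n]

theorem val_add_one_eq_or (i : Fin n) :
    (i.val + 1 < n ∧ (i + 1).val = i.val + 1) ∨ (i.val + 1 = n ∧ (i + 1).val = 0) := by
  have hval : (i + 1).val = (i.val + 1) % n := by rw [Fin.val_add, Fin.val_one', Nat.add_mod_mod]
  obtain h | h : i.val + 1 < n ∨ i.val + 1 = n := by omega
  · exact .inl ⟨h, hval.trans (Nat.mod_eq_of_lt h)⟩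
  · exact .inr ⟨h, by rw [hval, h, Nat.mod_self]⟩

/-- The colors at the vertices of a cycle with chords `D` satisfy all local conditions for a star
edge coloring. -/
structure IsCycleColoring (D : Set (Fin n × Fin n)) (c : Fin n → VertexColors α) : Prop where
  right_eq_left : ∀ i, (c i).right = (c (i + 1)).left
  proper : ∀ i, (c i).Proper
  starAt : ∀ i, StarAt (c (i - 1)) (c i) (c (i + 1))
  chordCompatible : ∀ p ∈ D, (c p.1).ChordCompatible (c p.2)

/-- The chords of a cycle, as a relation between the positions of their ends on the path that
results from cutting the cycle open at vertex `0`. -/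
def chordRel (D : Set (Fin n × Fin n)) (a b : ℕ) : Prop :=
  ∃ p ∈ D, p.1.val = a ∧ p.2.val = b

theorem Joinable.exists_isCycleColoring {D : Set (Fin n × Fin n)} {L : Prop}
    {s : VertexColors α} (hs : s.Proper)
    (h : Joinable (chordRel D) L True 0 n s s) :
    ∃ c : Fin n → VertexColors α, IsCycleColoring D c := by
  obtain ⟨c, rfl, hcn, hc, -, hR⟩ := h
  have hsucc (i : Fin n) : c (i + 1 : Fin n).val = c (i.val + 1) := by
    obtain ⟨-, h⟩ | ⟨hi, h⟩ := val_add_one_eq_or i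
    · rw [h]
    · rw [h, hi, hcn]
  refine ⟨fun i => c i, fun i => ?_, fun i => ?_, fun i => ?_, fun p hp => ?_⟩
  · rw [hsucc]
    exact hc.right_eq_left i (by omega) i.isLt
  · obtain h | h := i.val.eq_zero_or_pos
    · rwa [h]
    · exact hc.proper i h i.isLt
  · obtain ⟨i, rfl⟩ : ∃ k, k + 1 = i := ⟨i - 1, sub_add_cancel i 1⟩
    rw [hsucc (i + 1), add_sub_cancel_right]
    obtain ⟨hi, h⟩ | ⟨hi, h⟩ := val_add_one_eq_or i
    · rw [h]
      exact hc.starAt (i.val + 1) (by omega) hi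
    · obtain hi : i.val = n - 1 := by omega
      rw [h, hi]
      exact .inl (hR trivial)
  · exact hc.chordCompatible _ _ ⟨p, hp, rfl, rfl⟩ (by omega) p.2.isLt.le fun _ => p.2.isLt.ne

end Cycle

section Graph

theorem three_le_card_insert {β : Type*} [DecidableEq β] {a b c d : β} (hab : a ≠ b) (hbc : b ≠ c)
    (hcd : c ≠ d) (h : a ≠ c ∨ b ≠ d) : 3 ≤ ({a, b, c, d} : Finset β).card := by
  rcases h with hac | hbd
  · rw [← Finset.card_eq_three.2 ⟨a, b, c, hab, hac, hbc, rfl⟩]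
    exact Finset.card_le_card (by grind)
  · rw [← Finset.card_eq_three.2 ⟨b, c, d, hbc, hbd, hcd, rfl⟩]
    exact Finset.card_le_card (by grind)

variable {V : Type*} {G : SimpleGraph V}

theorem exists_sym2_eq_of_adj {β : Type*} {f : V → V → β}
    (hf : ∀ u v, G.Adj u v → f u v = f v u) :
    ∃ c : Sym2 V → β, ∀ u v, G.Adj u v → c s(u, v) = f u v := by
  refine ⟨fun e => f (Quot.out e).1 (Quot.out e).2, fun u v huv => ?_⟩
  have hout : s((Quot.out s(u, v)).1, (Quot.out s(u, v)).2) = s(u, v) := Quot.out_eq _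
  rcases Sym2.eq_iff.1 hout with ⟨h₁, h₂⟩ | ⟨h₁, h₂⟩
  · simp only [h₁, h₂]
  · simp only [h₁, h₂, hf u v huv]

theorem exists_isStarEdgeColoring {k : ℕ} {f : V → V → Fin k} (S : V → Set (Fin k))
    (hsymm : ∀ u v, G.Adj u v → f u v = f v u) (hmem : ∀ u v, G.Adj u v → f u v ∈ S u)
    (hproper : ∀ u v w, G.Adj u v → G.Adj u w → v ≠ w → f u v ≠ f u w)
    (hstar : ∀ u v w, G.Adj v u → G.Adj v w → u ≠ w → f v w ∉ S u ∨ f v u ∉ S w) :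
    ∃ c : Sym2 V → Fin k, IsStarEdgeColoring G c := by
  obtain ⟨c, hc⟩ := exists_sym2_eq_of_adj hsymm
  refine ⟨c, fun u v w huv huw hvw => ?_, fun v₀ v₁ v₂ v₃ v₄ h₀₁ h₁₂ h₂₃ h₃₄ hne => ?_⟩
  · rw [hc u v huv, hc u w huw]
    exact hproper u v w huv huw hvw
  · obtain ⟨h₀₂, h₁₃, h₂₄⟩ : v₀ ≠ v₂ ∧ v₁ ≠ v₃ ∧ v₂ ≠ v₄ := by
      simp only [List.pairwise_cons, List.mem_cons] at hne
      grind
    rw [hc _ _ h₀₁, hc _ _ h₁₂, hc _ _ h₂₃, hc _ _ h₃₄]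
    refine three_le_card_insert ?_ ?_ (hsymm _ _ h₂₃ ▸ hproper _ _ _ h₂₃.symm h₃₄ h₂₄) ?_
    · exact hsymm _ _ h₀₁ ▸ hproper _ _ _ h₀₁.symm h₁₂ h₀₂
    · exact hsymm _ _ h₁₂ ▸ hproper _ _ _ h₁₂.symm h₂₃ h₁₃
    -- If the colors alternated, those of `v₂v₃` and `v₁v₂` would recur at `v₁` and at `v₃`.
    · refine (hstar v₁ v₂ v₃ h₁₂.symm h₂₃ h₁₃).imp (fun h heq => h ?_) fun h heq => h ?_
      · rw [← heq, hsymm _ _ h₀₁]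
        exact hmem _ _ h₀₁.symm
      · rw [← hsymm _ _ h₁₂, heq]
        exact hmem _ _ h₃₄

end Graph

section CycleChordPendant

open Sum

variable {α : Type*} {n : ℕ} [NeZero n] {D : Set (Fin n × Fin n)} {P : Fin n → Prop}
  {i : Fin n} {x y z : Fin n ⊕ {i : Fin n // P i}}

/-- `x` is a neighbor of the cycle vertex `i` in `cycleChordPendant n D P` by a chord or by a
pendant edge. -/
inductive IsThirdNeighbor (D : Set (Fin n × Fin n)) (P : Fin n → Prop) (i : Fin n) :
    Fin n ⊕ {i : Fin n // P i} → Prop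
  | chord {j : Fin n} (h : (i, j) ∈ D ∨ (j, i) ∈ D) : IsThirdNeighbor D P i (inl j)
  | pendant (hi : P i) : IsThirdNeighbor D P i (inr ⟨i, hi⟩)

theorem cycleChordPendant_adj_inl :
    (cycleChordPendant n D P).Adj (inl i) x ↔
      x ≠ inl i ∧ (x = inl (i + 1) ∨ x = inl (i - 1) ∨ IsThirdNeighbor D P i x) := by
  simp only [cycleChordPendant, SimpleGraph.fromRel_adj]
  refine and_congr ne_comm ⟨?_, ?_⟩
  · rintro ((⟨k, ⟨⟩, rfl⟩ | ⟨p, hp, ⟨⟩, rfl⟩ | ⟨k, ⟨⟩, rfl⟩) |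
      (⟨k, rfl, ⟨⟩⟩ | ⟨p, hp, rfl, ⟨⟩⟩ | ⟨k, rfl, ⟨⟩⟩))
    · exact .inl rfl
    · exact .inr (.inr (.chord (.inl hp)))
    · exact .inr (.inr (.pendant k.2))
    · exact .inr (.inl (by rw [add_sub_cancel_right]))
    · exact .inr (.inr (.chord (.inr hp)))
  · rintro (rfl | rfl | h | hi)
    · exact .inl (.inl ⟨i, rfl, rfl⟩)
    · exact .inr (.inl ⟨i - 1, rfl, by rw [sub_add_cancel]⟩)
    · exact h.imp (fun h => .inr (.inl ⟨_, h, rfl, rfl⟩)) fun h => .inr (.inl ⟨_, h, rfl, rfl⟩)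
    · exact .inl (.inr (.inr ⟨⟨i, hi⟩, rfl, rfl⟩))

theorem cycleChordPendant_adj_inr {j : {i : Fin n // P i}} :
    (cycleChordPendant n D P).Adj (inr j) x ↔ x = inl j.1 := by
  simp only [cycleChordPendant, SimpleGraph.fromRel_adj]
  constructor
  · rintro ⟨-, (⟨k, ⟨⟩, -⟩ | ⟨p, -, ⟨⟩, -⟩ | ⟨k, ⟨⟩, -⟩) |
      (⟨k, -, ⟨⟩⟩ | ⟨p, -, -, ⟨⟩⟩ | ⟨k, rfl, ⟨⟩⟩)⟩
    rfl
  · rintro rfl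
    exact ⟨inr_ne_inl, .inr (.inr (.inr ⟨j, rfl, rfl⟩))⟩

theorem inl_add_one_ne_inl (hn : 3 ≤ n) (i : Fin n) :
    (inl (i + 1) : Fin n ⊕ {i : Fin n // P i}) ≠ inl i ∧
      (inl (i - 1) : Fin n ⊕ {i : Fin n // P i}) ≠ inl i ∧
      (inl (i + 1) : Fin n ⊕ {i : Fin n // P i}) ≠ inl (i - 1) := by
  have hpred := val_add_one_eq_or (i - 1)
  rw [sub_add_cancel] at hpred
  have hsucc := val_add_one_eq_or i
  simp only [ne_eq, inl.injEq, Fin.ext_iff]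
  omega

variable (hchord : ∀ p ∈ D, p.1.val + 1 < p.2.val ∧ ¬(p.1.val = 0 ∧ p.2.val = n - 1))

include hchord in
theorem IsThirdNeighbor.ne (h : IsThirdNeighbor D P i x) :
    x ≠ inl i ∧ x ≠ inl (i + 1) ∧ x ≠ inl (i - 1) := by
  rcases h with @⟨j, h⟩ | hi
  · have hpred := val_add_one_eq_or (i - 1)
    rw [sub_add_cancel] at hpred
    have hsucc := val_add_one_eq_or i
    simp only [ne_eq, inl.injEq, Fin.ext_iff]
    rcases h with h | h <;> have := hchord _ h <;> dsimp only at this <;> omega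
  · exact ⟨inr_ne_inl, inr_ne_inl, inr_ne_inl⟩

include hchord in
theorem IsThirdNeighbor.unique (hn : 3 ≤ n)
    (hdeg : ((cycleChordPendant n D P).neighborSet (inl i)).ncard ≤ 3)
    (hx : IsThirdNeighbor D P i x) (hy : IsThirdNeighbor D P i y) : x = y := by
  by_contra hxy
  obtain ⟨hnext, hprev, hne⟩ := inl_add_one_ne_inl (P := P) hn i
  have hx' := hx.ne hchord
  have hy' := hy.ne hchord
  have hsub : {inl (i + 1), inl (i - 1), x, y} ⊆
      (cycleChordPendant n D P).neighborSet (inl i) := by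
    simp only [Set.insert_subset_iff, Set.singleton_subset_iff, SimpleGraph.mem_neighborSet,
      cycleChordPendant_adj_inl]
    tauto
  have hcard : ({inl (i + 1), inl (i - 1), x, y} : Set (Fin n ⊕ {i : Fin n // P i})).ncard = 4 := by
    rw [Set.ncard_insert_of_notMem, Set.ncard_insert_of_notMem, Set.ncard_pair hxy] <;>
      simp only [Set.mem_insert_iff, Set.mem_singleton_iff] <;> grind
  have := Set.ncard_le_ncard hsub (Set.toFinite _)
  omega

/-- The color of the edge from one vertex of `cycleChordPendant n D P` to another one under the
coloring given by `c`. -/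
def edgeColor (P : Fin n → Prop) (c : Fin n → VertexColors α) :
    Fin n ⊕ {i : Fin n // P i} → Fin n ⊕ {i : Fin n // P i} → α
  | inl i, x => if x = inl (i + 1) then (c i).right else if x = inl (i - 1) then (c i).left
      else (c i).third
  | inr j, _ => (c j).third

/-- The colors of the edges at a vertex of `cycleChordPendant n D P`. -/
def seenColors (P : Fin n → Prop) (c : Fin n → VertexColors α) :
    Fin n ⊕ {i : Fin n // P i} → Set α
  | inl i => (c i).palette
  | inr j => {(c j).third}

variable {c : Fin n → VertexColors α}

theorem edgeColor_add_one (i : Fin n) : edgeColor P c (inl i) (inl (i + 1)) = (c i).right :=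
  if_pos rfl

theorem edgeColor_sub_one (hn : 3 ≤ n) (i : Fin n) :
    edgeColor P c (inl i) (inl (i - 1)) = (c i).left :=
  (if_neg (inl_add_one_ne_inl hn i).2.2.symm).trans (if_pos rfl)

include hchord in
theorem IsThirdNeighbor.edgeColor_eq (h : IsThirdNeighbor D P i x) :
    edgeColor P c (inl i) x = (c i).third :=
  (if_neg (h.ne hchord).2.1).trans (if_neg (h.ne hchord).2.2)

theorem edgeColor_mem_seenColors (x y : Fin n ⊕ {i : Fin n // P i}) :
    edgeColor P c x y ∈ seenColors P c x := by
  rcases x with i | j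
  · simp only [edgeColor, seenColors, mem_palette]
    grind
  · rfl

namespace IsCycleColoring

variable (hc : IsCycleColoring D c)
include hc

theorem notMem_seenColors (hx : IsThirdNeighbor D P i x) :
    (c i).left ∉ seenColors P c x ∧ (c i).right ∉ seenColors P c x := by
  rcases hx with @⟨j, h | h⟩ | hi
  · exact (hc.chordCompatible _ h).2
  · exact ((hc.chordCompatible _ h).symm (hc.proper i)).2
  · exact ⟨(hc.proper i).1, (hc.proper i).2.2.symm⟩

include hchord in
theorem edgeColor_comm (hn : 3 ≤ n) (h : (cycleChordPendant n D P).Adj x y) :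
    edgeColor P c x y = edgeColor P c y x := by
  have cycle_edge i :
      edgeColor P c (inl i) (inl (i + 1)) = edgeColor P c (inl (i + 1)) (inl i) := by
    have hprev := edgeColor_sub_one (P := P) (c := c) hn (i + 1)
    rw [add_sub_cancel_right] at hprev
    rw [edgeColor_add_one, hprev, hc.right_eq_left]
  have from_cycle i y (h : (cycleChordPendant n D P).Adj (inl i) y) :
      edgeColor P c (inl i) y = edgeColor P c y (inl i) := by
    obtain ⟨-, rfl | rfl | hy⟩ := cycleChordPendant_adj_inl.1 h
    · exact cycle_edge i
    · simpa only [sub_add_cancel] using (cycle_edge (i - 1)).symm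
    · rw [hy.edgeColor_eq hchord]
      rcases hy with @⟨j, hij⟩ | hi
      · rw [IsThirdNeighbor.edgeColor_eq hchord (.chord hij.symm)]
        exact hij.elim (fun h => (hc.chordCompatible _ h).1)
          fun h => (hc.chordCompatible _ h).1.symm
      · rfl
  rcases x with i | j
  · exact from_cycle i y h
  · obtain rfl := cycleChordPendant_adj_inr.1 h
    exact (from_cycle _ _ h.symm).symm

variable (hn : 3 ≤ n)
  (hunique : ∀ i x y, IsThirdNeighbor D P i x → IsThirdNeighbor D P i y → x = y)
include hn hunique

include hchord in
theorem edgeColor_ne (hy : (cycleChordPendant n D P).Adj x y)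
    (hz : (cycleChordPendant n D P).Adj x z) (hyz : y ≠ z) :
    edgeColor P c x y ≠ edgeColor P c x z := by
  rcases x with i | j
  · have hp := hc.proper i
    obtain ⟨-, rfl | rfl | hy⟩ := cycleChordPendant_adj_inl.1 hy <;>
      obtain ⟨-, rfl | rfl | hz⟩ := cycleChordPendant_adj_inl.1 hz <;>
      simp only [edgeColor_add_one, edgeColor_sub_one hn, IsThirdNeighbor.edgeColor_eq hchord, *]
    exacts [absurd rfl hyz, hp.2.1.symm, hp.2.2.symm, hp.2.1, absurd rfl hyz, hp.1, hp.2.2,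
      hp.1.symm, absurd (hunique i y z hy hz) hyz]
  · exact absurd ((cycleChordPendant_adj_inr.1 hy).trans (cycleChordPendant_adj_inr.1 hz).symm) hyz

theorem edgeColor_notMem_seenColors (hy : (cycleChordPendant n D P).Adj x y)
    (hz : (cycleChordPendant n D P).Adj x z) (hyz : y ≠ z) :
    edgeColor P c x z ∉ seenColors P c y ∨ edgeColor P c x y ∉ seenColors P c z := by
  rcases x with i | j
  · have off_third y z (hy : IsThirdNeighbor D P i y) (hz : (cycleChordPendant n D P).Adj (inl i) z)
        (hyz : y ≠ z) : edgeColor P c (inl i) z ∉ seenColors P c y := by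
      obtain ⟨-, rfl | rfl | hz⟩ := cycleChordPendant_adj_inl.1 hz
      · exact edgeColor_add_one i ▸ (hc.notMem_seenColors hy).2
      · exact edgeColor_sub_one hn i ▸ (hc.notMem_seenColors hy).1
      · exact absurd (hunique i y z hy hz) hyz
    obtain ⟨-, hy' | hy' | hy'⟩ := cycleChordPendant_adj_inl.1 hy
    on_goal 3 => exact .inl (off_third y z hy' hz hyz)
    all_goals
      obtain ⟨-, hz' | hz' | hz'⟩ := cycleChordPendant_adj_inl.1 hz
      on_goal 3 => exact .inr (off_third z y hz' hy hyz.symm)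
    · exact absurd (hy'.trans hz'.symm) hyz
    · rw [hy', hz', edgeColor_add_one, edgeColor_sub_one hn]
      exact (hc.starAt i).symm
    · rw [hy', hz', edgeColor_add_one, edgeColor_sub_one hn]
      exact hc.starAt i
    · exact absurd (hy'.trans hz'.symm) hyz
  · exact absurd ((cycleChordPendant_adj_inr.1 hy).trans (cycleChordPendant_adj_inr.1 hz).symm) hyz

end IsCycleColoring

omit [NeZero n] in
theorem isNoncrossingMatching_chordRel
    (hchord : ∀ p ∈ D, p.1.val + 1 < p.2.val)
    (hnoncross : ∀ p ∈ D, ∀ q ∈ D, ¬(p.1.val < q.1.val ∧ q.1.val < p.2.val ∧ p.2.val < q.2.val))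
    (hunique : ∀ i x y, IsThirdNeighbor D P i x → IsThirdNeighbor D P i y → x = y) :
    IsNoncrossingMatching (chordRel D) where
  add_one_lt := by
    rintro _ _ ⟨p, hp, rfl, rfl⟩
    exact hchord p hp
  eq_of_common_end {a b c} hab hac := by
    have exists_third {a b} (h : chordRel D a b ∨ chordRel D b a) :
        ∃ i j : Fin n, i.val = a ∧ j.val = b ∧ IsThirdNeighbor D P i (inl j) := by
      rcases h with ⟨p, hp, rfl, rfl⟩ | ⟨p, hp, rfl, rfl⟩
      exacts [⟨p.1, p.2, rfl, rfl, .chord (.inl hp)⟩, ⟨p.2, p.1, rfl, rfl, .chord (.inr hp)⟩]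
    obtain ⟨i, j, rfl, rfl, hj⟩ := exists_third hab
    obtain ⟨i', k, hi, rfl, hk⟩ := exists_third hac
    obtain rfl := Fin.ext hi
    exact congrArg Fin.val (inl_injective (hunique _ _ _ hj hk))
  not_cross := by
    rintro _ _ _ _ ⟨p, hp, rfl, rfl⟩ ⟨q, hq, rfl, rfl⟩
    exact hnoncross p hp q hq

end CycleChordPendant

/-- Every subcubic graph obtained from a cycle of length `n ≥ 3` by adding
pairwise non-crossing chords between non-consecutive cycle vertices and
attaching at most one pendant vertex to each cycle vertex admits a star edge
coloring with 5 colors. (This is the theorem that subcubic outerplanar graphs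
have star chromatic index at most 5, in the case of graphs without nontrivial
bridges, using the description of 2-connected outerplanar graphs as cycles
with pairwise non-crossing chords.) -/
theorem starChromaticIndex_cycleChordPendant_le
    (n : ℕ) [NeZero n] (hn : 3 ≤ n) (D : Set (Fin n × Fin n)) (P : Fin n → Prop)
    (hchord : ∀ p ∈ D, p.1.val + 1 < p.2.val ∧ ¬(p.1.val = 0 ∧ p.2.val = n - 1))
    (hnoncross : ∀ p ∈ D, ∀ q ∈ D,
      ¬(p.1.val < q.1.val ∧ q.1.val < p.2.val ∧ p.2.val < q.2.val) ∧
      ¬(q.1.val < p.1.val ∧ p.1.val < q.2.val ∧ q.2.val < p.2.val))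
    (hdeg : ∀ x, ((cycleChordPendant n D P).neighborSet x).ncard ≤ 3) :
    starChromaticIndex (cycleChordPendant n D P) ≤ 5 := by
  have hunique i x y (hx : IsThirdNeighbor D P i x) (hy : IsThirdNeighbor D P i y) : x = y :=
    hx.unique hchord hn (hdeg _) hy
  have hD : IsNoncrossingMatching (chordRel D) :=
    isNoncrossingMatching_chordRel (fun p hp => (hchord p hp).1)
      (fun p hp q hq => (hnoncross p hp q hq).1) hunique
  have hlt a b (h : chordRel D a b) : b < n := by
    obtain ⟨p, -, -, rfl⟩ := h
    exact p.2.isLt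
  have hends : ¬chordRel D 0 (n - 1) := by
    rintro ⟨p, hp, h⟩
    exact (hchord p hp).2 h
  obtain ⟨s, hs, hjoin⟩ := hD.exists_joinable_self hn hlt hends
  obtain ⟨c, hc⟩ := hjoin.exists_isCycleColoring hs
  exact Nat.sInf_le <| exists_isStarEdgeColoring (seenColors P c)
    (fun _ _ => hc.edgeColor_comm hchord hn) (fun x y _ => edgeColor_mem_seenColors x y)
    (fun _ _ _ => hc.edgeColor_ne hchord hn hunique)
    fun _ _ _ => hc.edgeColor_notMem_seenColors hn hunique
end
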